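/- arXiv:1612.02960 — 11 statements merged into one kernel-verified Lean document; each statement's English description precedes it below -/
import Mathlib

section
/- For all integers a, b, c ≥ 2, the triangle group T(a,b,c) possesses a normal subgroup N of finite index such that N is torsion-free. -/
/-- Relator set of the triangle group `T(a,b,c)`: the relators `x^a`, `y^b`, `z^c`
and `x·y·z` in the free group on three generators `x, y, z`. -/
def TriangleRels (a b c : ℕ) : Set (FreeGroup (Fin 3)) :=
  {FreeGroup.of 0 ^ a, FreeGroup.of 1 ^ b, FreeGroup.of 2 ^ c,
    FreeGroup.of 0 * FreeGroup.of 1 * FreeGroup.of 2}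

/-- The triangle group `T(a,b,c)`. -/
abbrev TriangleGroup (a b c : ℕ) : Type :=
  PresentedGroup (TriangleRels a b c)

/-! ### Minkowski's lemma -/

theorem exists_one_add_pow_eq {R : Type*} [Ring R] (x : R) (n : ℕ) :
    ∃ d, (1 + x) ^ n = 1 + n • x + x ^ 2 * d := by
  induction n with
  | zero => exact ⟨0, by simp⟩
  | succ n ih =>
    obtain ⟨d, hd⟩ := ih
    refine ⟨n • 1 + d + d * x, ?_⟩
    rw [pow_succ, hd, succ_nsmul]
    noncomm_ring

theorem Matrix.exists_eq_one_add_three_pow_smul {n : Type*} [Fintype n] [DecidableEq n]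
    {A : Matrix n n ℤ} {p : ℕ} (hp : p.Prime) (hA : A ^ p = 1)
    (h : ∃ C : Matrix n n ℤ, A = 1 + (3 : ℤ) • C) (j : ℕ) :
    ∃ C : Matrix n n ℤ, A = 1 + (3 : ℤ) ^ (j + 1) • C := by
  induction j with
  | zero => simpa using h
  | succ j ih =>
    obtain ⟨C, rfl⟩ := ih
    suffices ∃ D : Matrix n n ℤ, C = (3 : ℤ) • D by
      obtain ⟨D, rfl⟩ := this
      exact ⟨D, by rw [smul_smul, pow_succ _ (j + 1)]⟩
    have h3 : (3 : ℤ) ^ (j + 1) ≠ 0 := by positivity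
    by_cases hp3 : p = 3
    · subst hp3
      refine ⟨-((3 : ℤ) ^ j • C ^ 2 + ((3 : ℤ) ^ (2 * j)) • C ^ 3), ?_⟩
      have key : ((3 : ℤ) ^ (j + 1) * 3) • (C - (3 : ℤ) •
          -((3 : ℤ) ^ j • C ^ 2 + ((3 : ℤ) ^ (2 * j)) • C ^ 3)) =
          (1 + (3 : ℤ) ^ (j + 1) • C) ^ 3 - 1 := by
        have e : (1 + (3 : ℤ) ^ (j + 1) • C) ^ 3 - 1 = (3 : ℤ) • (3 : ℤ) ^ (j + 1) • C +
            (3 : ℤ) • ((3 : ℤ) ^ (j + 1) • C) ^ 2 + ((3 : ℤ) ^ (j + 1) • C) ^ 3 := by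
          generalize (3 : ℤ) ^ (j + 1) • C = X
          noncomm_ring
        rw [e, smul_pow, smul_pow]
        match_scalars <;> ring
      rw [hA, sub_self, smul_eq_zero_iff_right (by positivity)] at key
      exact sub_eq_zero.mp key
    · obtain ⟨d, hd⟩ := exists_one_add_pow_eq ((3 : ℤ) ^ (j + 1) • C) p
      have key : (3 : ℤ) ^ (j + 1) • ((p : ℤ) • C + (3 : ℤ) ^ (j + 1) • (C ^ 2 * d)) = 0 := by
        rw [hA, smul_pow, smul_mul_assoc, add_assoc, left_eq_add] at hd
        rw [← hd]
        match_scalars <;> ring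
      rw [smul_eq_zero_iff_right h3] at key
      have hcop : IsCoprime (p : ℤ) 3 := by
        exact_mod_cast (Nat.coprime_primes hp Nat.prime_three).mpr hp3
      obtain ⟨u, v, huv⟩ := hcop
      refine ⟨v • C - u • (3 : ℤ) ^ j • (C ^ 2 * d), ?_⟩
      have := congrArg (u • ·) key
      simp only [smul_zero] at this
      calc C = (u * p + v * 3) • C := by rw [huv, one_smul]
        _ = (3 : ℤ) • (v • C - u • (3 : ℤ) ^ j • (C ^ 2 * d)) +
            u • ((p : ℤ) • C + (3 : ℤ) ^ (j + 1) • (C ^ 2 * d)) := by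
          match_scalars <;> ring
        _ = _ := by rw [this, add_zero]

/-- Minkowski's lemma: the kernel of reduction modulo `3` on integral matrices contains no
nontrivial element of finite order. -/
theorem Matrix.eq_one_of_isOfFinOrder_of_map_zmod_three_eq_one {n : Type*} [Fintype n]
    [DecidableEq n] {A : Matrix n n ℤ} (hA : IsOfFinOrder A)
    (h : (Int.castRingHom (ZMod 3)).mapMatrix A = 1) : A = 1 := by
  by_contra hne
  obtain ⟨p, hp, hdvd⟩ := Nat.exists_prime_and_dvd (mt orderOf_eq_one_iff.mp hne)
  set A' := A ^ (orderOf A / p)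
  have hord : orderOf A' = p := orderOf_pow_orderOf_div hA.orderOf_pos.ne' hdvd
  have hmod : (Int.castRingHom (ZMod 3)).mapMatrix A' = 1 := by simp only [A', map_pow, h, one_pow]
  have hbase : ∃ C : Matrix n n ℤ, A' = 1 + (3 : ℤ) • C := by
    have hd (i k : n) : (3 : ℤ) ∣ (A' - 1) i k := by
      have h0 : (Int.castRingHom (ZMod 3)).mapMatrix (A' - 1) = 0 := by
        rw [map_sub, hmod, map_one, sub_self]
      exact (ZMod.intCast_zmod_eq_zero_iff_dvd _ 3).mp (congrFun (congrFun h0 i) k)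
    choose C hC using hd
    exact ⟨.of C, by rw [← sub_eq_iff_eq_add']; ext i k; simpa using hC i k⟩
  have hone : A' = 1 := by
    rw [← sub_eq_zero]
    ext i k
    refine Int.eq_zero_of_abs_lt_dvd (m := 3 ^ (((A' - 1) i k).natAbs + 1)) ?_ ?_
    · obtain ⟨C, hC⟩ := Matrix.exists_eq_one_add_three_pow_smul hp (hord ▸ pow_orderOf_eq_one A')
        hbase ((A' - 1) i k).natAbs
      exact ⟨C i k, by
        have := congrFun (congrFun (sub_eq_iff_eq_add'.mpr hC) i) k
        exact this.trans (by simp)⟩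
    · rw [Int.abs_eq_natAbs]
      exact_mod_cast (Nat.lt_pow_self (by norm_num)).trans (Nat.pow_lt_pow_succ (by norm_num))
  rw [hone, orderOf_one] at hord
  exact hp.one_lt.ne hord

theorem exists_normal_index_ne_zero_of_faithful_int {G L : Type*} [Group G] [AddCommGroup L]
    [Module.Finite ℤ L] [Module.Free ℤ L] (ρ : G →* Module.End ℤ L)
    (hρ : Function.Injective ρ) :
    ∃ N : Subgroup G, N.Normal ∧ N.index ≠ 0 ∧ ∀ x ∈ N, IsOfFinOrder x → x = 1 := by
  classical
  let e := LinearMap.toMatrixAlgEquiv (Module.Free.chooseBasis ℤ L)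
  let σ : G →* Matrix _ _ ℤ := e.toRingEquiv.toMulEquiv.toMonoidHom.comp ρ
  have hσ : Function.Injective σ := e.injective.comp hρ
  let τ : G →* Matrix _ _ (ZMod 3) :=
    (Int.castRingHom (ZMod 3)).mapMatrix.toMonoidHom.comp σ
  refine ⟨τ.toHomUnits.ker, inferInstance, Subgroup.FiniteIndex.index_ne_zero, fun x hx hfin ↦ ?_⟩
  rw [MonoidHom.ker_toHomUnits, MonoidHom.mem_ker] at hx
  apply hσ
  rw [map_one]
  exact Matrix.eq_one_of_isOfFinOrder_of_map_zmod_three_eq_one (σ.isOfFinOrder hfin) hx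

/-! ### The geometric representation of a Coxeter group -/

section Dihedral

open Module Real

theorem sin_nat_add_two_mul (k : ℕ) (φ : ℝ) :
    sin ((k + 2 : ℕ) * φ) = 2 * cos φ * sin ((k + 1 : ℕ) * φ) - sin (k * φ) := by
  have h1 : ((k + 2 : ℕ) : ℝ) * φ = (k + 1 : ℕ) * φ + φ := by push_cast; ring
  have h2 : (k : ℝ) * φ = (k + 1 : ℕ) * φ - φ := by push_cast; ring
  rw [h1, h2, sin_add, sin_sub]
  ring

variable {V : Type*} [AddCommGroup V] [Module ℝ V] {x y : V} {f g : Dual ℝ V} {φ : ℝ}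

theorem sin_smul_reflection_mul_reflection_pow_apply (hf : f x = 2) (hg : g y = 2)
    (hfy : f y = -2 * cos φ) (hgx : g x = -2 * cos φ) (n : ℕ) :
    sin φ • ((reflection hf * reflection hg) ^ n) x =
      sin ((2 * n + 1 : ℕ) * φ) • x + sin ((2 * n : ℕ) * φ) • y := by
  induction n with
  | zero => simp
  | succ n ih =>
    rw [pow_succ', LinearEquiv.mul_apply, ← map_smul, ih, LinearEquiv.mul_apply]
    simp only [reflection_apply, map_add, map_sub, map_smul, hf, hg, hfy, hgx]
    rw [show 2 * (n + 1) + 1 = 2 * n + 1 + 2 by ring, sin_nat_add_two_mul (2 * n + 1),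
      show 2 * (n + 1) = 2 * n + 2 by ring, show 2 * n + 1 + 1 = 2 * n + 2 by ring,
      sin_nat_add_two_mul (2 * n)]
    module

theorem reflection_mul_reflection_pow_eq_one (hf : f x = 2) (hg : g y = 2) {m : ℕ} (hm : 2 ≤ m)
    (hfy : f y = -2 * cos (π / m)) (hgx : g x = -2 * cos (π / m)) :
    (reflection hf * reflection hg) ^ m = 1 := by
  have hm0 : (0 : ℝ) < m := by positivity
  have hsin : 0 < sin (π / m) := by
    refine sin_pos_of_pos_of_lt_pi (by positivity) (div_lt_self pi_pos ?_)
    exact_mod_cast hm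
  have fixed {x y : V} {f g : Dual ℝ V} (hf : f x = 2) (hg : g y = 2)
      (hfy : f y = -2 * cos (π / m)) (hgx : g x = -2 * cos (π / m)) :
      ((reflection hf * reflection hg) ^ m) x = x := by
    have h := sin_smul_reflection_mul_reflection_pow_apply hf hg hfy hgx m
    have h1 : ((2 * m + 1 : ℕ) : ℝ) * (π / m) = π / m + 2 * π := by
      push_cast; field_simp; ring
    have h2 : ((2 * m : ℕ) : ℝ) * (π / m) = 2 * π := by push_cast; field_simp
    rw [h1, h2, sin_add_two_pi, sin_two_pi, zero_smul, add_zero] at h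
    exact smul_right_injective V hsin.ne' h
  have hx := fixed hf hg hfy hgx
  have hy : ((reflection hf * reflection hg) ^ m) y = y := by
    have h := fixed hg hf hgx hfy
    have hinv : reflection hg * reflection hf = (reflection hf * reflection hg)⁻¹ := by
      rw [mul_inv_rev, reflection_inv, reflection_inv]
    rw [hinv, inv_pow] at h
    replace h := congrArg ((reflection hf * reflection hg) ^ m) h
    rw [← LinearEquiv.mul_apply, mul_inv_cancel] at h
    exact h.symm
  have orth (u : V) (hfu : f u = 0) (hgu : g u = 0) (k : ℕ) :
      ((reflection hf * reflection hg) ^ k) u = u := by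
    induction k with
    | zero => simp
    | succ k ih => simp [pow_succ, reflection_apply, hfu, hgu, ih]
  ext v
  set c := cos (π / m)
  set D := sin (π / m) ^ 2
  have hD : D ≠ 0 := by positivity
  have hDc : D = 1 - c ^ 2 := sin_sq _
  set a := (f v + c * g v) / (2 * D)
  set b := (g v + c * f v) / (2 * D)
  have hu := orth (v - a • x - b • y)
    (by simp only [map_sub, map_smul, hf, hfy, a, b, smul_eq_mul]; field_simp; rw [hDc]; ring)
    (by simp only [map_sub, map_smul, hg, hgx, a, b, smul_eq_mul]; field_simp; rw [hDc]; ring) m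
  simpa [hx, hy] using hu

end Dihedral

namespace CoxeterMatrix

open Module Real

variable {B : Type*} [Fintype B] (M : CoxeterMatrix B)

/-- The linear form pairing a vector with the simple root `i`, normalised so that it takes the
value `-2 cos (π / M i j)` on the simple root `j`. -/
noncomputable def simpleCoroot (i : B) : Dual ℝ (B → ℝ) :=
  ∑ j, (-2 * cos (π / M i j)) • LinearMap.proj j

theorem simpleCoroot_apply (i : B) (v : B → ℝ) :
    M.simpleCoroot i v = ∑ j, -2 * cos (π / M i j) * v j := by
  simp [simpleCoroot]

variable [DecidableEq B]

theorem simpleCoroot_single (i j : B) :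
    M.simpleCoroot i (Pi.single j 1) = -2 * cos (π / M i j) := by
  simp [simpleCoroot_apply, Pi.single_apply]

theorem simpleCoroot_single_self (i : B) : M.simpleCoroot i (Pi.single i 1) = 2 := by
  simp [simpleCoroot_single]

/-- The reflection in the simple root `i`. -/
noncomputable def geomReflection (i : B) : (B → ℝ) ≃ₗ[ℝ] (B → ℝ) :=
  reflection (M.simpleCoroot_single_self i)

theorem geomReflection_apply (i : B) (v : B → ℝ) :
    M.geomReflection i v = v - M.simpleCoroot i v • Pi.single i 1 :=
  reflection_apply _ _

variable {M}

theorem two_le_of_ne {B : Type*} {M : CoxeterMatrix B} (hM : ∀ i j, M i j ≠ 0)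
    {i j : B} (hij : i ≠ j) : 2 ≤ M i j := by
  have := hM i j
  have := M.off_diagonal i j hij
  omega

theorem isLiftable_geomReflection (hM : ∀ i j, M i j ≠ 0) : M.IsLiftable M.geomReflection := by
  intro i j
  by_cases hij : i = j
  · subst hij
    ext1 v
    simpa [geomReflection] using involutive_reflection (M.simpleCoroot_single_self i) v
  · exact reflection_mul_reflection_pow_eq_one _ _ (two_le_of_ne hM hij)
      (M.simpleCoroot_single i j) (by rw [M.symmetric i j, M.simpleCoroot_single])

end CoxeterMatrix

namespace CoxeterSystem

open Module Real

variable {B W : Type*} [Fintype B] [DecidableEq B] [Group W] {M : CoxeterMatrix B}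
  (cs : CoxeterSystem M W) (hM : ∀ i j, M i j ≠ 0)

/-- The geometric representation of a Coxeter group all of whose labels are finite. -/
noncomputable def geomRep : W →* ((B → ℝ) ≃ₗ[ℝ] (B → ℝ)) :=
  cs.lift ⟨M.geomReflection, CoxeterMatrix.isLiftable_geomReflection hM⟩

theorem geomRep_simple (i : B) : cs.geomRep hM (cs.simple i) = M.geomReflection i :=
  cs.lift_apply_simple _ i

theorem exists_geomRep_alternatingWord_apply {i j : B} (hij : i ≠ j) {n : ℕ} (hn : n < M i j) :
    ∃ p q : ℝ, 0 ≤ p ∧ 0 ≤ q ∧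
      cs.geomRep hM (cs.wordProd (alternatingWord i j n)) (Pi.single i 1) =
        p • Pi.single i 1 + q • Pi.single j 1 := by
  have hm := CoxeterMatrix.two_le_of_ne hM hij
  have hm0 : (0 : ℝ) < M i j := by positivity
  set φ := π / M i j with hφ
  have hφ0 : 0 < φ := by positivity
  have hsin_nonneg {k : ℕ} (hk : k ≤ M i j) : 0 ≤ sin (k * φ) := by
    refine sin_nonneg_of_nonneg_of_le_pi (by positivity) ?_
    rw [hφ, mul_div_left_comm]
    refine mul_le_of_le_one_right pi_pos.le ((div_le_one hm0).mpr ?_)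
    exact_mod_cast hk
  have hsin : 0 < sin φ := by
    refine sin_pos_of_pos_of_lt_pi hφ0 (div_lt_self pi_pos ?_)
    exact_mod_cast hm
  have hji : M.simpleCoroot j (Pi.single i 1) = -2 * cos φ := by
    rw [M.simpleCoroot_single, ← M.symmetric i j]
  have key (k : ℕ) : ((M.geomReflection i * M.geomReflection j) ^ k) (Pi.single i 1) =
      (sin φ)⁻¹ • (sin ((2 * k + 1 : ℕ) * φ) • Pi.single i 1 +
        sin ((2 * k : ℕ) * φ) • Pi.single j 1) := by
    rw [← sin_smul_reflection_mul_reflection_pow_apply (M.simpleCoroot_single_self i)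
      (M.simpleCoroot_single_self j) (M.simpleCoroot_single i j) hji k, inv_smul_smul₀ hsin.ne']
    rfl
  rw [prod_alternatingWord_eq_mul_pow, map_mul, map_pow, map_mul, geomRep_simple, geomRep_simple,
    LinearEquiv.mul_apply, key]
  rcases Nat.even_or_odd' n with ⟨k, rfl | rfl⟩
  · refine ⟨(sin φ)⁻¹ * sin ((2 * k + 1 : ℕ) * φ), (sin φ)⁻¹ * sin ((2 * k : ℕ) * φ),
      mul_nonneg (inv_nonneg.mpr hsin.le) (hsin_nonneg hn),
      mul_nonneg (inv_nonneg.mpr hsin.le) (hsin_nonneg hn.le), ?_⟩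
    simp [mul_smul]
  · refine ⟨(sin φ)⁻¹ * sin ((2 * k + 1 : ℕ) * φ), (sin φ)⁻¹ * sin ((2 * k + 2 : ℕ) * φ),
      mul_nonneg (inv_nonneg.mpr hsin.le) (hsin_nonneg hn.le),
      mul_nonneg (inv_nonneg.mpr hsin.le) (hsin_nonneg hn), ?_⟩
    have hk : (2 * k + 1) / 2 = k := by omega
    rw [if_neg (by simp), geomRep_simple, hk, sin_nat_add_two_mul]
    simp only [M.geomReflection_apply, map_smul, map_add, hji, M.simpleCoroot_single_self,
      smul_eq_mul]
    module

/-- If `w` does not have `i` as a right descent, then `w` sends the simple root `i` to a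
nonnegative combination of simple roots. -/
theorem geomRep_single_nonneg {w : W} {i : B} (hw : ¬ cs.IsRightDescent w i) :
    0 ≤ cs.geomRep hM w (Pi.single i 1) := by
  induction hn : cs.length w using Nat.strong_induction_on generalizing w i with
  | _ n ih =>
  subst hn
  by_cases hw1 : w = 1
  · simp [hw1]
  obtain ⟨t, ht⟩ := cs.exists_rightDescent_of_ne_one hw1
  have hit : i ≠ t := by rintro rfl; exact hw ht
  let P (k : ℕ) : Prop :=
    cs.length (w * (cs.wordProd (alternatingWord i t k))⁻¹) + k = cs.length w
  have hP1 : P 1 := by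
    simpa [P, alternatingWord] using cs.isRightDescent_iff.mp ht
  classical
  obtain ⟨k, hk1, hPk, hPk1⟩ : ∃ k, 1 ≤ k ∧ P k ∧ ¬ P (k + 1) := by
    have hle {k : ℕ} (h : P k) : k ≤ cs.length w := by simp only [P] at h; omega
    refine ⟨Nat.findGreatest P (cs.length w), Nat.le_findGreatest (hle hP1) hP1,
      Nat.findGreatest_spec (hle hP1) hP1, fun h ↦ ?_⟩
    exact Nat.findGreatest_is_greatest (Nat.lt_succ_self _) (hle h) h
  set v := w * (cs.wordProd (alternatingWord i t k))⁻¹ with hv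
  have hwv : w = v * cs.wordProd (alternatingWord i t k) := by simp [hv]
  have hlen : cs.length v + k = cs.length w := hPk
  have hnext : ¬ cs.IsRightDescent v (if Even k then t else i) := by
    intro h
    rw [isRightDescent_iff] at h
    apply hPk1
    simp only [P]
    rw [alternatingWord_succ', wordProd_cons, mul_inv_rev, inv_simple, ← mul_assoc, ← hv]
    omega
  have hlast : ¬ cs.IsRightDescent v (if Even k then i else t) := by
    obtain ⟨l, rfl⟩ := Nat.exists_eq_add_of_le' hk1
    intro h
    rw [isRightDescent_iff] at h
    have hsplit : w = v * cs.simple (if Even (l + 1) then i else t) *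
        cs.wordProd (alternatingWord i t l) := by
      conv_lhs => rw [hwv, alternatingWord_succ', wordProd_cons]
      simp only [Nat.even_add_one, ite_not, mul_assoc]
    have h1 := cs.length_mul_le (v * cs.simple (if Even (l + 1) then i else t))
      (cs.wordProd (alternatingWord i t l))
    have h2 := cs.length_wordProd_le (alternatingWord i t l)
    rw [← hsplit] at h1
    rw [length_alternatingWord] at h2
    omega
  have hvi : ¬ cs.IsRightDescent v i := by split_ifs at hnext hlast <;> assumption
  have hvt : ¬ cs.IsRightDescent v t := by split_ifs at hnext hlast <;> assumption
  have hkm : k < M i t := by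
    by_contra! hkm
    have h1 := cs.length_mul_le v (cs.wordProd (alternatingWord t i (k + 1)))
    have h2 := cs.length_wordProd_le (alternatingWord t i (k + 1))
    have h3 := cs.not_isReduced_alternatingWord t i (hM t i)
      (show k + 1 > M t i by rw [M.symmetric t i]; omega)
    rw [alternatingWord_succ, wordProd_concat, ← mul_assoc, ← hwv] at h1
    rw [IsReduced, length_alternatingWord] at h3
    rw [length_alternatingWord] at h2
    rw [alternatingWord_succ, wordProd_concat] at h2 h3
    rw [not_isRightDescent_iff] at hw
    omega
  obtain ⟨p, q, hp, hq, hpq⟩ := cs.exists_geomRep_alternatingWord_apply hM hit hkm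
  rw [hwv, map_mul, LinearEquiv.mul_apply, hpq, map_add, map_smul, map_smul]
  have hlt : cs.length v < cs.length w := by omega
  exact add_nonneg (smul_nonneg hp (ih _ hlt hvi rfl)) (smul_nonneg hq (ih _ hlt hvt rfl))

theorem geomRep_injective : Function.Injective (cs.geomRep hM) := by
  rw [injective_iff_map_eq_one]
  intro w hw
  by_contra hne
  obtain ⟨i, hi⟩ := cs.exists_rightDescent_of_ne_one hne
  have h := cs.geomRep_single_nonneg hM (cs.isRightDescent_iff_not_isRightDescent_mul.mp hi) i
  rw [map_mul, hw, one_mul, geomRep_simple, M.geomReflection_apply,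
    M.simpleCoroot_single_self] at h
  norm_num at h

end CoxeterSystem

/-! ### An invariant lattice of the geometric representation -/

namespace CoxeterMatrix

open Module Real

variable {B : Type*} (M : CoxeterMatrix B)

/-- The subring of `ℝ` generated by the numbers `-2 cos (π / M i j)`. -/
noncomputable def coefficientRing : Subalgebra ℤ ℝ :=
  Algebra.adjoin ℤ (Set.range fun p : B × B ↦ -2 * cos (π / M p.1 p.2))

theorem coefficientRing_fg [Finite B] : (Subalgebra.toSubmodule M.coefficientRing).FG := by
  refine fg_adjoin_of_finite (Set.finite_range _) ?_
  rintro _ ⟨p, rfl⟩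
  have h := (isIntegral_two_mul_cos_rat_mul_pi (1 / M p.1 p.2)).neg
  have heq : -2 * cos (π / M p.1 p.2) = -(2 * cos ((1 / M p.1 p.2 : ℚ) * π)) := by
    push_cast
    rw [one_div_mul_eq_div, neg_mul]
  change IsIntegral ℤ (-2 * cos (π / M p.1 p.2))
  rw [heq]
  exact h

/-- The vectors whose coordinates lie in the coefficient ring. -/
noncomputable def rootLattice : Submodule ℤ (B → ℝ) :=
  Submodule.pi Set.univ fun _ ↦ Subalgebra.toSubmodule M.coefficientRing

theorem mem_rootLattice {v : B → ℝ} : v ∈ M.rootLattice ↔ ∀ i, v i ∈ M.coefficientRing := by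
  simp [rootLattice]

instance [Finite B] : Module.Finite ℤ M.rootLattice :=
  Module.Finite.iff_fg.mpr (Submodule.fg_pi fun _ ↦ M.coefficientRing_fg)

theorem geomReflection_mem_rootLattice [Fintype B] [DecidableEq B] (i : B) {v : B → ℝ}
    (hv : v ∈ M.rootLattice) : M.geomReflection i v ∈ M.rootLattice := by
  rw [mem_rootLattice] at hv ⊢
  intro j
  have hcoroot : M.simpleCoroot i v ∈ M.coefficientRing := by
    rw [simpleCoroot_apply]
    exact sum_mem fun k _ ↦ mul_mem (Algebra.subset_adjoin ⟨(i, k), rfl⟩) (hv k)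
  rw [geomReflection_apply]
  refine sub_mem (hv j) (mul_mem hcoroot ?_)
  rw [Pi.single_apply]
  split_ifs
  exacts [one_mem _, zero_mem _]

end CoxeterMatrix

namespace CoxeterSystem

variable {B W : Type*} [Fintype B] [DecidableEq B] [Group W] {M : CoxeterMatrix B}
  (cs : CoxeterSystem M W) (hM : ∀ i j, M i j ≠ 0)

theorem geomRep_mem_rootLattice (w : W) {v : B → ℝ} (hv : v ∈ M.rootLattice) :
    cs.geomRep hM w v ∈ M.rootLattice := by
  induction w using cs.simple_induction_left with
  | one => simpa
  | mul_simple_left w i ih =>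
    rw [map_mul, geomRep_simple]
    exact M.geomReflection_mem_rootLattice i ih

/-- The geometric representation restricted to the root lattice. -/
noncomputable def latticeRep : W →* Module.End ℤ M.rootLattice where
  toFun w := ((cs.geomRep hM w).toLinearMap.restrictScalars ℤ).restrict
    fun _ ↦ cs.geomRep_mem_rootLattice hM w
  map_one' := by ext; simp
  map_mul' _ _ := by ext; simp only [map_mul]; rfl

theorem latticeRep_injective : Function.Injective (cs.latticeRep hM) := by
  intro w₁ w₂ h
  apply cs.geomRep_injective hM
  apply LinearEquiv.toLinearMap_injective
  refine (Pi.basisFun ℝ B).ext fun i ↦ ?_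
  have hmem : (Pi.single i 1 : B → ℝ) ∈ M.rootLattice := by
    rw [M.mem_rootLattice]
    intro j
    rw [Pi.single_apply]
    split_ifs
    exacts [one_mem _, zero_mem _]
  rw [Pi.basisFun_apply]
  exact congrArg Subtype.val (LinearMap.congr_fun h ⟨Pi.single i 1, hmem⟩)

end CoxeterSystem

/-! ### Triangle groups as subgroups of Coxeter groups -/

/-- The Coxeter matrix on `Fin 3` whose off-diagonal labels are `a`, `b`, `c`. -/
def triangleCoxeterMatrix {a b c : ℕ} (ha : 2 ≤ a) (hb : 2 ≤ b) (hc : 2 ≤ c) :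
    CoxeterMatrix (Fin 3) where
  M := !![1, a, c; a, 1, b; c, b, 1]
  isSymm := by ext i j; fin_cases i <;> fin_cases j <;> rfl
  diagonal i := by fin_cases i <;> rfl
  off_diagonal i j h := by fin_cases i <;> fin_cases j <;> simp at h ⊢ <;> omega

namespace TriangleGroup

variable {a b c : ℕ}

local notation "X" => (PresentedGroup.of 0 : TriangleGroup a b c)
local notation "Y" => (PresentedGroup.of 1 : TriangleGroup a b c)
local notation "Z" => (PresentedGroup.of 2 : TriangleGroup a b c)

theorem x_pow : X ^ a = 1 :=
  PresentedGroup.one_of_mem (rels := TriangleRels a b c) (by simp [TriangleRels])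

theorem y_pow : Y ^ b = 1 :=
  PresentedGroup.one_of_mem (rels := TriangleRels a b c) (by simp [TriangleRels])

theorem z_pow : Z ^ c = 1 :=
  PresentedGroup.one_of_mem (rels := TriangleRels a b c) (by simp [TriangleRels])

theorem x_mul_y_mul_z : X * Y * Z = 1 :=
  PresentedGroup.one_of_mem (rels := TriangleRels a b c) (by simp [TriangleRels])

/-- The homomorphism out of a triangle group determined by the images of the generators. -/
def lift {G : Type*} [Group G] (x y z : G) (hx : x ^ a = 1) (hy : y ^ b = 1) (hz : z ^ c = 1)
    (h : x * y * z = 1) : TriangleGroup a b c →* G :=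
  PresentedGroup.toGroup (f := ![x, y, z]) <| by
    rintro r (rfl | rfl | rfl | rfl) <;> simpa

section lift

variable {G : Type*} [Group G] {x y z : G} (hx : x ^ a = 1) (hy : y ^ b = 1) (hz : z ^ c = 1)
  (h : x * y * z = 1)

@[simp] theorem lift_x : lift x y z hx hy hz h X = x := PresentedGroup.toGroup.of _

@[simp] theorem lift_y : lift x y z hx hy hz h Y = y := PresentedGroup.toGroup.of _

@[simp] theorem lift_z : lift x y z hx hy hz h Z = z := PresentedGroup.toGroup.of _

end lift

theorem hom_ext {G : Type*} [Group G] {f g : TriangleGroup a b c →* G} (hx : f X = g X)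
    (hy : f Y = g Y) (hz : f Z = g Z) : f = g :=
  PresentedGroup.ext fun i ↦ by fin_cases i <;> assumption

theorem y_mul_x_pow : (Y * X) ^ c = 1 := by
  have h : Y * X = X⁻¹ * Z⁻¹ * X⁻¹⁻¹ := by
    rw [eq_inv_of_mul_eq_one_right (x_mul_y_mul_z (a := a) (b := b) (c := c))]
    group
  rw [h, conj_pow, inv_pow, z_pow]
  simp

/-- The automorphism inverting the first two generators. -/
def flip : TriangleGroup a b c →* TriangleGroup a b c :=
  lift X⁻¹ Y⁻¹ (Y * X) (by rw [inv_pow, x_pow, inv_one]) (by rw [inv_pow, y_pow, inv_one])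
    y_mul_x_pow (by group)

theorem flip_flip (g : TriangleGroup a b c) : flip (flip g) = g := by
  have h : (flip.comp flip : TriangleGroup a b c →* _) = MonoidHom.id _ := by
    refine hom_ext ?_ ?_ ?_
    · simp [flip]
    · simp [flip]
    · have := eq_inv_of_mul_eq_one_right (x_mul_y_mul_z (a := a) (b := b) (c := c))
      simp [flip, this]
  exact DFunLike.congr_fun h g

/-- The left regular action. -/
def leftPerm : TriangleGroup a b c →* Equiv.Perm (TriangleGroup a b c) :=
  MulAction.toPermHom _ _

theorem leftPerm_injective : Function.Injective (leftPerm (a := a) (b := b) (c := c)) :=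
  MulAction.toPerm_injective

/-- `flip` as a permutation of the underlying set. -/
def flipPerm : Equiv.Perm (TriangleGroup a b c) where
  toFun := flip
  invFun := flip
  left_inv := flip_flip
  right_inv := flip_flip

theorem flipPerm_mul_self : (flipPerm * flipPerm : Equiv.Perm (TriangleGroup a b c)) = 1 :=
  Equiv.ext flip_flip

theorem flipPerm_mul_leftPerm (g : TriangleGroup a b c) :
    flipPerm * leftPerm g = leftPerm (flip g) * flipPerm := by
  ext h
  simp [flipPerm, leftPerm]

variable (ha : 2 ≤ a) (hb : 2 ≤ b) (hc : 2 ≤ c)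

/-- The map from the triangle group to the triangle Coxeter group sending the generators to
products of two simple reflections. -/
def toCoxeterGroup : TriangleGroup a b c →* (triangleCoxeterMatrix ha hb hc).Group :=
  let cs := (triangleCoxeterMatrix ha hb hc).toCoxeterSystem
  lift (cs.simple 0 * cs.simple 1) (cs.simple 1 * cs.simple 2) (cs.simple 2 * cs.simple 0)
    (by exact cs.simple_mul_simple_pow 0 1) (by exact cs.simple_mul_simple_pow 1 2)
    (by exact cs.simple_mul_simple_pow 2 0) (by simp [mul_assoc])

theorem toCoxeterGroup_x : toCoxeterGroup ha hb hc X =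
    (triangleCoxeterMatrix ha hb hc).toCoxeterSystem.simple 0 *
      (triangleCoxeterMatrix ha hb hc).toCoxeterSystem.simple 1 :=
  FreeGroup.lift_apply_of

theorem toCoxeterGroup_y : toCoxeterGroup ha hb hc Y =
    (triangleCoxeterMatrix ha hb hc).toCoxeterSystem.simple 1 *
      (triangleCoxeterMatrix ha hb hc).toCoxeterSystem.simple 2 :=
  FreeGroup.lift_apply_of

theorem toCoxeterGroup_z : toCoxeterGroup ha hb hc Z =
    (triangleCoxeterMatrix ha hb hc).toCoxeterSystem.simple 2 *
      (triangleCoxeterMatrix ha hb hc).toCoxeterSystem.simple 0 :=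
  FreeGroup.lift_apply_of

/-- The permutations of the triangle group by which the simple reflections of the triangle
Coxeter group act, extending the regular action. -/
def simplePerm : Fin 3 → Equiv.Perm (TriangleGroup a b c) :=
  ![leftPerm X * flipPerm, flipPerm, flipPerm * leftPerm Y]

theorem simplePerm_zero_mul_one :
    simplePerm (a := a) (b := b) (c := c) 0 * simplePerm 1 = leftPerm X := by
  simp [simplePerm, mul_assoc, flipPerm_mul_self]

theorem simplePerm_one_mul_two :
    simplePerm (a := a) (b := b) (c := c) 1 * simplePerm 2 = leftPerm Y := by
  simp [simplePerm, ← mul_assoc, flipPerm_mul_self]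

theorem simplePerm_two_mul_zero :
    simplePerm (a := a) (b := b) (c := c) 2 * simplePerm 0 = leftPerm Z := by
  have h : simplePerm (a := a) (b := b) (c := c) 2 * simplePerm 0 =
      flipPerm * leftPerm (flip Z) * flipPerm := by
    simp [simplePerm, flip, mul_assoc]
  rw [h, flipPerm_mul_leftPerm, flip_flip, mul_assoc, flipPerm_mul_self, mul_one]

theorem simplePerm_mul_self (i : Fin 3) :
    simplePerm (a := a) (b := b) (c := c) i * simplePerm i = 1 := by
  fin_cases i
  · simp only [simplePerm, Fin.zero_eta, Matrix.cons_val_zero]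
    rw [mul_assoc, ← mul_assoc flipPerm, flipPerm_mul_leftPerm, mul_assoc, flipPerm_mul_self,
      mul_one, ← map_mul]
    simp [flip]
  · exact flipPerm_mul_self
  · change flipPerm * leftPerm Y * (flipPerm * leftPerm Y) = 1
    rw [flipPerm_mul_leftPerm, mul_assoc, ← mul_assoc flipPerm, flipPerm_mul_leftPerm, flip_flip,
      mul_assoc, flipPerm_mul_self, mul_one, ← map_mul]
    simp [flip]

theorem isLiftable_simplePerm :
    (triangleCoxeterMatrix ha hb hc).IsLiftable (simplePerm (a := a) (b := b) (c := c)) := by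
  have swap {i j : Fin 3} {n : ℕ}
      (h : (simplePerm (a := a) (b := b) (c := c) i * simplePerm j) ^ n = 1) :
      (simplePerm (a := a) (b := b) (c := c) j * simplePerm i) ^ n = 1 := by
    have hinv : simplePerm (a := a) (b := b) (c := c) j * simplePerm i =
        (simplePerm i * simplePerm j)⁻¹ := by
      rw [mul_inv_rev, inv_eq_of_mul_eq_one_right (simplePerm_mul_self i),
        inv_eq_of_mul_eq_one_right (simplePerm_mul_self j)]
    rw [hinv, inv_pow, h, inv_one]
  have h01 : (simplePerm (a := a) (b := b) (c := c) 0 * simplePerm 1) ^ a = 1 := by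
    rw [simplePerm_zero_mul_one, ← map_pow, x_pow, map_one]
  have h12 : (simplePerm (a := a) (b := b) (c := c) 1 * simplePerm 2) ^ b = 1 := by
    rw [simplePerm_one_mul_two, ← map_pow, y_pow, map_one]
  have h20 : (simplePerm (a := a) (b := b) (c := c) 2 * simplePerm 0) ^ c = 1 := by
    rw [simplePerm_two_mul_zero, ← map_pow, z_pow, map_one]
  have hself (i : Fin 3) : (simplePerm (a := a) (b := b) (c := c) i * simplePerm i) ^ 1 = 1 := by
    rw [simplePerm_mul_self, one_pow]
  intro i j
  fin_cases i <;> fin_cases j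
  exacts [hself 0, h01, swap h20, swap h01, hself 1, h12, h20, swap h12, hself 2]

theorem toCoxeterGroup_injective : Function.Injective (toCoxeterGroup ha hb hc) := by
  let cs := (triangleCoxeterMatrix ha hb hc).toCoxeterSystem
  let σ : (triangleCoxeterMatrix ha hb hc).Group →* Equiv.Perm (TriangleGroup a b c) :=
    cs.lift ⟨simplePerm, isLiftable_simplePerm ha hb hc⟩
  have hσ (i : Fin 3) : σ (cs.simple i) = simplePerm i := cs.lift_apply_simple _ i
  have hcomp : σ.comp (toCoxeterGroup ha hb hc) = leftPerm := by
    refine hom_ext ?_ ?_ ?_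
    · rw [MonoidHom.comp_apply, toCoxeterGroup_x, map_mul, hσ, hσ, simplePerm_zero_mul_one]
    · rw [MonoidHom.comp_apply, toCoxeterGroup_y, map_mul, hσ, hσ, simplePerm_one_mul_two]
    · rw [MonoidHom.comp_apply, toCoxeterGroup_z, map_mul, hσ, hσ, simplePerm_two_mul_zero]
  refine Function.Injective.of_comp (f := σ) ?_
  rw [← MonoidHom.coe_comp, hcomp]
  exact leftPerm_injective

end TriangleGroup

/-- Every triangle group `T(a,b,c)` with `a, b, c ≥ 2` has a torsion-free
normal subgroup of finite index. -/
theorem triangleGroup_exists_torsionFree_normal_finiteIndex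
    (a b c : ℕ) (ha : 2 ≤ a) (hb : 2 ≤ b) (hc : 2 ≤ c) :
    ∃ N : Subgroup (TriangleGroup a b c), N.Normal ∧ N.index ≠ 0 ∧
      ∀ x ∈ N, IsOfFinOrder x → x = 1 := by
  let cs := (triangleCoxeterMatrix ha hb hc).toCoxeterSystem
  have hM (i j : Fin 3) : triangleCoxeterMatrix ha hb hc i j ≠ 0 := by
    fin_cases i <;> fin_cases j <;> simp [triangleCoxeterMatrix] <;> omega
  exact exists_normal_index_ne_zero_of_faithful_int
    ((cs.latticeRep hM).comp (TriangleGroup.toCoxeterGroup ha hb hc))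
    ((cs.latticeRep_injective hM).comp (TriangleGroup.toCoxeterGroup_injective ha hb hc))
end

section
/- (Fox's permutation lemma) For all integers a, b, c ≥ 2 there exist a natural number n and permutations σ and τ of Fin n such that σ has order a, τ has order b, and the product σ·τ has order c. -/
open Matrix MatrixGroups

/-- A consequence of the Cayley–Hamilton theorem: the powers of a `2 × 2` matrix with eigenvalues
`x` and `y` are linear combinations of the matrix and the identity. -/
theorem sub_smul_pow_eq_of_trace_of_det {R : Type*} [CommRing R] (M : Matrix (Fin 2) (Fin 2) R)
    {x y : R} (htr : M.trace = x + y) (hdet : M.det = x * y) (k : ℕ) :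
    (x - y) • M ^ k = (x ^ k - y ^ k) • M + (x * y ^ k - y * x ^ k) • 1 := by
  have hsq : M * M = (x + y) • M - (x * y) • 1 := by
    rw [trace_fin_two] at htr
    rw [det_fin_two] at hdet
    rw [← htr, ← hdet]
    ext i j
    fin_cases i <;> fin_cases j <;> simp [mul_apply] <;> ring
  induction k with
  | zero => simp
  | succ k ih =>
    rw [pow_succ, ← smul_mul_assoc, ih, add_mul, smul_mul_assoc, hsq, smul_mul_assoc, one_mul]
    module

/-- In `SL₂` over a field, a power of a matrix with distinct eigenvalues `x` and `x⁻¹` is central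
if and only if it has a single eigenvalue. -/
theorem pow_mem_center_iff_of_trace {K : Type*} [Field K] (M : SL(2, K)) {x y : K}
    (hxy : x * y = 1) (hne : x ≠ y) (htr : M.1.trace = x + y) (k : ℕ) :
    M ^ k ∈ Subgroup.center SL(2, K) ↔ x ^ k = y ^ k := by
  have hpow := sub_smul_pow_eq_of_trace_of_det M.1 htr (M.2.trans hxy.symm) k
  have hsub : x - y ≠ 0 := sub_ne_zero.2 hne
  constructor
  · rw [Matrix.SpecialLinearGroup.mem_center_iff]
    rintro ⟨r, -, hr⟩
    rw [Matrix.SpecialLinearGroup.coe_pow] at hr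
    rw [← hr] at hpow
    by_contra hk
    have hk' : x ^ k - y ^ k ≠ 0 := sub_ne_zero.2 hk
    have h01 : M.1 0 1 = 0 := by simpa [hk'] using congr_fun₂ hpow 0 1
    have h00 := congr_fun₂ hpow 0 0
    have h11 := congr_fun₂ hpow 1 1
    simp at h00 h11
    have hdiag : M.1 0 0 = M.1 1 1 := mul_left_cancel₀ hk' (by linear_combination h11 - h00)
    have hdet := M.2
    rw [det_fin_two, h01] at hdet
    rw [trace_fin_two] at htr
    have hsq : (x - y) ^ 2 = 0 := by
      linear_combination (-(x + y) - M.1 0 0 - M.1 1 1) * htr - 4 * hxy + 4 * hdet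
        + (M.1 0 0 - M.1 1 1) * hdiag
    exact hsub (pow_eq_zero_iff two_ne_zero |>.1 hsq)
  · intro hk
    rw [Subgroup.mem_center_iff]
    intro g
    apply Subtype.ext
    rw [hk, sub_self, zero_smul, zero_add] at hpow
    have hscalar : (M ^ k : SL(2, K)).1 = y ^ k • 1 := by
      rw [Matrix.SpecialLinearGroup.coe_pow]
      apply smul_right_injective _ hsub
      simp only [hpow, smul_smul]
      ring_nf
    rw [Matrix.SpecialLinearGroup.coe_mul, Matrix.SpecialLinearGroup.coe_mul, hscalar]
    simp

/-- If `x` has order `2 * a` with `2 ≤ a`, then a matrix in `SL₂` with eigenvalues `x` and `x⁻¹`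
has order `a` modulo the center. -/
theorem orderOf_mk_center_eq_of_trace {K : Type*} [Field K] (M : SL(2, K)) {x : Kˣ} {a : ℕ}
    (ha : 2 ≤ a) (hx : orderOf x = 2 * a) (htr : M.1.trace = (x : K) + (x⁻¹ : Kˣ)) :
    orderOf (M : SL(2, K) ⧸ Subgroup.center SL(2, K)) = a := by
  have hpow (k : ℕ) : (x : K) ^ k = ((x⁻¹ : Kˣ) : K) ^ k ↔ a ∣ k := by
    rw [← Units.val_pow_eq_pow_val, ← Units.val_pow_eq_pow_val, Units.val_inj, inv_pow,
      eq_inv_iff_mul_eq_one, ← pow_add, ← two_mul, ← orderOf_dvd_iff_pow_eq_one, hx]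
    exact Nat.mul_dvd_mul_iff_left two_pos
  have hne : (x : K) ≠ (x⁻¹ : Kˣ) := fun h => by
    have := Nat.le_of_dvd one_pos ((hpow 1).1 (by simpa using h))
    omega
  refine Nat.dvd_right_iff_eq.1 fun k => ?_
  rw [orderOf_dvd_iff_pow_eq_one, ← QuotientGroup.mk_pow, QuotientGroup.eq_one_iff,
    pow_mem_center_iff_of_trace M x.mul_inv hne htr, hpow]

/-- Any two elements of a finite group can be realised as permutations of some `Fin n`,
preserving their orders and the order of their product. -/
theorem exists_perm_fin_orderOf_eq {G : Type*} [Group G] [Finite G] (g h : G) :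
    ∃ (n : ℕ) (σ τ : Equiv.Perm (Fin n)),
      orderOf σ = orderOf g ∧ orderOf τ = orderOf h ∧ orderOf (σ * τ) = orderOf (g * h) := by
  obtain ⟨n, ⟨e⟩⟩ := Finite.exists_equiv_fin G
  let f : G →* Equiv.Perm (Fin n) := e.permCongrHom.toMonoidHom.comp (MulAction.toPermHom G G)
  have hf : Function.Injective f := e.permCongrHom.injective.comp MulAction.toPerm_injective
  refine ⟨n, f g, f h, orderOf_injective f hf g, orderOf_injective f hf h, ?_⟩
  rw [← map_mul, orderOf_injective f hf]

/-- **Fox's permutation lemma**: for all `a, b, c ≥ 2` there are permutations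
`σ`, `τ` of some finite set `Fin n` with `σ` of order `a`, `τ` of order `b`
and `σ·τ` of order `c`. -/
theorem fox_permutation_lemma (a b c : ℕ) (ha : 2 ≤ a) (hb : 2 ≤ b) (hc : 2 ≤ c) :
    ∃ (n : ℕ) (σ τ : Equiv.Perm (Fin n)),
      orderOf σ = a ∧ orderOf τ = b ∧ orderOf (σ * τ) = c := by
  obtain ⟨p, hp, -, hmod⟩ :=
    Nat.exists_prime_gt_modEq_one (k := 2 * (a * b * c)) 1 (by positivity)
  have : Fact p.Prime := ⟨hp⟩
  have hdvd : 2 * (a * b * c) ∣ p - 1 := (Nat.modEq_iff_dvd' hp.one_le).1 hmod.symm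
  have hunit (d : ℕ) (hd : d ∣ a * b * c) : ∃ x : (ZMod p)ˣ, orderOf x = 2 * d := by
    obtain ⟨g, hg⟩ := IsCyclic.exists_ofOrder_eq_natCard (α := (ZMod p)ˣ)
    rw [Nat.card_eq_fintype_card, ZMod.card_units] at hg
    have hd' : 2 * d ∣ orderOf g := hg ▸ (Nat.mul_dvd_mul_left 2 hd).trans hdvd
    exact ⟨g ^ (orderOf g / (2 * d)), orderOf_pow_orderOf_div (orderOf_pos g).ne' hd'⟩
  obtain ⟨x, hx⟩ := hunit a ⟨b * c, by ring⟩
  obtain ⟨y, hy⟩ := hunit b ⟨a * c, by ring⟩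
  obtain ⟨z, hz⟩ := hunit c ⟨a * b, by ring⟩
  let t : ZMod p := z + (z⁻¹ : (ZMod p)ˣ) - x * y - (x⁻¹ : (ZMod p)ˣ) * (y⁻¹ : (ZMod p)ˣ)
  let A : SL(2, ZMod p) := ⟨!![(x : ZMod p), 1; 0, (x⁻¹ : (ZMod p)ˣ)], by
    rw [det_fin_two_of, x.mul_inv]; ring⟩
  let B : SL(2, ZMod p) := ⟨!![(y : ZMod p), 0; t, (y⁻¹ : (ZMod p)ˣ)], by
    rw [det_fin_two_of, y.mul_inv]; ring⟩
  have hAB : (A * B).1.trace = (z : ZMod p) + (z⁻¹ : (ZMod p)ˣ) := by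
    rw [Matrix.SpecialLinearGroup.coe_mul, trace_fin_two]
    simp only [A, B, t, mul_apply, Fin.sum_univ_two, of_apply, cons_val', cons_val_zero,
      cons_val_one, cons_val_fin_one]
    ring
  have := exists_perm_fin_orderOf_eq (A : SL(2, ZMod p) ⧸ Subgroup.center SL(2, ZMod p)) B
  rwa [← QuotientGroup.mk_mul, orderOf_mk_center_eq_of_trace A ha hx (trace_fin_two _),
    orderOf_mk_center_eq_of_trace B hb hy (trace_fin_two _),
    orderOf_mk_center_eq_of_trace (A * B) hc hz hAB] at this
end

section
/- Let h : G → K be a group homomorphism and S a subset of G such that (i) every element of G of finite order is conjugate in G to an integer power of some element of S, and (ii) every s ∈ S has finite order and the order of h(s) in K equals the order of s in G. Then the kernel of h is torsion-free, i.e., every element of ker h of finite order is the identity. -/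
/-- If `h : G →* K` and `S ⊆ G` are such that every torsion element of `G`
is conjugate to an integer power of an element of `S`, and every `s ∈ S`
has finite order preserved by `h`, then the kernel of `h` is torsion-free. -/
theorem ker_torsionFree_of_orders_preserved {G K : Type*} [Group G] [Group K]
    (h : G →* K) (S : Set G)
    (hconj : ∀ g : G, IsOfFinOrder g → ∃ s ∈ S, ∃ k : ℤ, IsConj g (s ^ k))
    (hord : ∀ s ∈ S, IsOfFinOrder s ∧ orderOf (h s) = orderOf s) :
    ∀ x ∈ h.ker, IsOfFinOrder x → x = 1 := by
  intro x hx hfin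
  obtain ⟨s, hs, k, hxk⟩ := hconj x hfin
  have hone : h s ^ k = 1 := by
    have hmap := h.map_isConj hxk
    rwa [MonoidHom.mem_ker.mp hx, isConj_one_right, map_zpow] at hmap
  have hpow : s ^ k = 1 := by
    rwa [← orderOf_dvd_iff_zpow_eq_one, (hord s hs).2, orderOf_dvd_iff_zpow_eq_one] at hone
  rwa [hpow, isConj_one_left] at hxk
end

section
/- For all integers a, b, c ≥ 2, in the triangle group T(a,b,c) the generators have exact orders: orderOf x̄ = a, orderOf ȳ = b, and orderOf z̄ = c. -/
/-- Cayley–Hamilton for powers of a `2 × 2` matrix of determinant one and trace `w + w⁻¹`. -/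
theorem Matrix.smul_pow_of_det_eq_one {K : Type*} [Field K] (A : Matrix (Fin 2) (Fin 2) K)
    (hdet : A.det = 1) {w : K} (hw : w ≠ 0) (htr : A.trace = w + w⁻¹) (n : ℕ) :
    (w - w⁻¹) • A ^ (n + 1) =
      (w ^ (n + 1) - w⁻¹ ^ (n + 1)) • A - (w ^ n - w⁻¹ ^ n) • (1 : Matrix (Fin 2) (Fin 2) K) := by
  have hsq : A * A = (w + w⁻¹) • A - 1 := by
    rw [Matrix.det_fin_two] at hdet
    rw [Matrix.trace_fin_two] at htr
    rw [← htr]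
    ext i j
    fin_cases i <;> fin_cases j <;> simp [Matrix.mul_apply, Fin.sum_univ_two] <;>
      first
      | ring1
      | linear_combination -hdet
  induction n with
  | zero => simp
  | succ n ih =>
    rw [pow_succ A, ← smul_mul_assoc, ih, sub_mul, smul_mul_assoc, smul_mul_assoc, hsq, one_mul,
      smul_sub, smul_smul]
    have hcoeff : w ^ (n + 1 + 1) - w⁻¹ ^ (n + 1 + 1) =
        (w ^ (n + 1) - w⁻¹ ^ (n + 1)) * (w + w⁻¹) - (w ^ n - w⁻¹ ^ n) := by
      have h : w * w⁻¹ = 1 := mul_inv_cancel₀ hw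
      linear_combination (w⁻¹ ^ n - w ^ n) * h
    rw [hcoeff]
    module

/-- The image in `PSL₂(K)` of a matrix with distinct eigenvalues `w`, `w⁻¹` has the same order
as `w ^ 2`. -/
theorem Matrix.SpecialLinearGroup.orderOf_mk_eq_orderOf_sq {K : Type*} [Field K]
    (A : Matrix.SpecialLinearGroup (Fin 2) K) {w : K} (hw : w ≠ 0) (hw2 : w ^ 2 ≠ 1)
    (htr : (A : Matrix (Fin 2) (Fin 2) K).trace = w + w⁻¹) :
    orderOf (QuotientGroup.mk A : Matrix.ProjectiveSpecialLinearGroup (Fin 2) K) =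
      orderOf (w ^ 2) := by
  rw [orderOf_eq_orderOf_iff]
  intro n
  rw [← QuotientGroup.mk_pow, QuotientGroup.eq_one_iff, Matrix.SpecialLinearGroup.mem_center_iff]
  obtain _ | n := n
  · exact ⟨fun _ => by simp, fun _ => ⟨1, by simp, by simp⟩⟩
  have hww : w * w⁻¹ = 1 := mul_inv_cancel₀ hw
  have hsub : w - w⁻¹ ≠ 0 := fun h => hw2 (by linear_combination w * h + hww)
  have hwn : w ^ (n + 1) * w⁻¹ ^ (n + 1) = 1 := by rw [← mul_pow, hww, one_pow]
  have hpow := Matrix.smul_pow_of_det_eq_one (A : Matrix (Fin 2) (Fin 2) K) A.2 hw htr n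
  have hdet : (A : Matrix (Fin 2) (Fin 2) K).det = 1 := A.2
  rw [← pow_mul, mul_comm 2, pow_mul]
  constructor
  · rintro ⟨r, -, hr⟩
    rw [Matrix.SpecialLinearGroup.coe_pow] at hr
    rw [← hr] at hpow
    by_contra hne
    have hd : w ^ (n + 1) - w⁻¹ ^ (n + 1) ≠ 0 := fun h =>
      hne (by linear_combination w ^ (n + 1) * h + hwn)
    have h01 : A 0 1 = 0 := by
      have := congrFun (congrFun hpow 0) 1
      simpa [hd, -inv_pow] using this
    have h00 := congrFun (congrFun hpow 0) 0
    have h11 := congrFun (congrFun hpow 1) 1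
    simp at h00 h11
    have heq : A 0 0 = A 1 1 := by
      apply mul_left_cancel₀ hd
      simp only [inv_pow]
      linear_combination h11 - h00
    rw [Matrix.trace_fin_two] at htr
    rw [Matrix.det_fin_two] at hdet
    rw [h01, ← heq] at hdet
    rw [← heq] at htr
    refine hsub (pow_eq_zero_iff two_ne_zero |>.1 ?_)
    linear_combination (-(w + w⁻¹) - 2 * A 0 0) * htr + 4 * hdet - 4 * hww
  · intro h
    have hd : w ^ (n + 1) - w⁻¹ ^ (n + 1) = 0 := by
      linear_combination w⁻¹ ^ (n + 1) * h - w ^ (n + 1) * hwn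
    rw [hd, zero_smul, zero_sub, ← neg_smul] at hpow
    have hA : (A : Matrix (Fin 2) (Fin 2) K) ^ (n + 1) =
        Matrix.scalar (Fin 2) ((w - w⁻¹)⁻¹ * -(w ^ n - w⁻¹ ^ n)) := by
      rw [Matrix.scalar_apply, ← Matrix.smul_one_eq_diagonal, mul_smul, ← hpow, smul_smul, inv_mul_cancel₀ hsub,
        one_smul]
    refine ⟨_, ?_, by rw [Matrix.SpecialLinearGroup.coe_pow]; exact hA.symm⟩
    have := congrArg Matrix.det hA
    rw [Matrix.det_pow, hdet, one_pow] at this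
    simpa using this.symm

/-- `PSL₂(ℂ)` contains elements of any prescribed orders `a, b, c ≥ 2` with product one. -/
theorem exists_projectiveSpecialLinearGroup_orderOf_eq (a b c : ℕ)
    (ha : 2 ≤ a) (hb : 2 ≤ b) (hc : 2 ≤ c) :
    ∃ x y z : Matrix.ProjectiveSpecialLinearGroup (Fin 2) ℂ,
      orderOf x = a ∧ orderOf y = b ∧ orderOf z = c ∧ x * y * z = 1 := by
  have root (n : ℕ) (hn : 2 ≤ n) : ∃ w : ℂ, w ≠ 0 ∧ w ^ 2 ≠ 1 ∧ orderOf (w ^ 2) = n := by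
    have hζ := Complex.isPrimitiveRoot_exp n (by lia)
    obtain ⟨w, hw⟩ := IsAlgClosed.exists_pow_nat_eq (Complex.exp (2 * Real.pi * Complex.I / n))
      two_pos
    refine ⟨w, ?_, ?_, ?_⟩
    · rintro rfl
      exact Complex.exp_ne_zero _ (by rw [← hw]; simp)
    · rw [hw]
      exact hζ.ne_one hn
    · rw [hw, ← hζ.eq_orderOf]
  obtain ⟨u, hu, hu2, hua⟩ := root a ha
  obtain ⟨v, hv, hv2, hvb⟩ := root b hb
  obtain ⟨w, hw, hw2, hwc⟩ := root c hc
  let X : Matrix.SpecialLinearGroup (Fin 2) ℂ := ⟨!![u, 1; 0, u⁻¹], by simp [hu]⟩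
  let Y : Matrix.SpecialLinearGroup (Fin 2) ℂ :=
    ⟨!![v, 0; w + w⁻¹ - u * v - u⁻¹ * v⁻¹, v⁻¹], by simp [hv]⟩
  refine ⟨QuotientGroup.mk X, QuotientGroup.mk Y, (QuotientGroup.mk (X * Y))⁻¹, ?_, ?_, ?_, ?_⟩
  · rw [X.orderOf_mk_eq_orderOf_sq hu hu2 (by simp [X, Matrix.trace_fin_two]), hua]
  · rw [Y.orderOf_mk_eq_orderOf_sq hv hv2 (by simp [Y, Matrix.trace_fin_two]), hvb]
  · rw [orderOf_inv, (X * Y).orderOf_mk_eq_orderOf_sq hw hw2, hwc]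
    rw [Matrix.SpecialLinearGroup.coe_mul]
    simp [X, Y, Matrix.trace_fin_two]
    ring
  · rw [QuotientGroup.mk_mul, mul_inv_cancel]

/-- In the triangle group `T(a,b,c)` with `a, b, c ≥ 2`, the generators have
exact orders `a`, `b` and `c`. -/
theorem triangleGroup_orderOf_generators (a b c : ℕ)
    (ha : 2 ≤ a) (hb : 2 ≤ b) (hc : 2 ≤ c) :
    orderOf (PresentedGroup.of 0 : TriangleGroup a b c) = a ∧
    orderOf (PresentedGroup.of 1 : TriangleGroup a b c) = b ∧
    orderOf (PresentedGroup.of 2 : TriangleGroup a b c) = c := by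
  obtain ⟨x, y, z, hx, hy, hz, hxyz⟩ :=
    exists_projectiveSpecialLinearGroup_orderOf_eq a b c ha hb hc
  have hrels : ∀ r ∈ TriangleRels a b c, FreeGroup.lift ![x, y, z] r = 1 := by
    rintro r (rfl | rfl | rfl | rfl)
    · simp [← hx, pow_orderOf_eq_one]
    · simp [← hy, pow_orderOf_eq_one]
    · simp [← hz, pow_orderOf_eq_one]
    · simpa using hxyz
  have order_eq (i : Fin 3) (n : ℕ) (hmem : FreeGroup.of i ^ n ∈ TriangleRels a b c)
      (hi : orderOf (![x, y, z] i) = n) :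
      orderOf (PresentedGroup.of i : TriangleGroup a b c) = n := by
    apply Nat.dvd_antisymm
    · exact orderOf_dvd_of_pow_eq_one (PresentedGroup.one_of_mem hmem)
    · have := orderOf_map_dvd (PresentedGroup.toGroup hrels)
        (PresentedGroup.of i : TriangleGroup a b c)
      rwa [PresentedGroup.toGroup.of, hi] at this
  exact ⟨order_eq 0 a (by simp [TriangleRels]) hx, order_eq 1 b (by simp [TriangleRels]) hy,
    order_eq 2 c (by simp [TriangleRels]) hz⟩
end

section
/- (Parabolic and hyperbolic cases) For all integers a, b, c ≥ 2 with 1/a + 1/b + 1/c ≤ 1 (equivalently b·c + a·c + a·b ≤ a·b·c), the triangle group T(a,b,c) is an infinite group. -/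
open Matrix
open scoped commutatorElement

/-- The Cayley–Hamilton identity for a `2 × 2` matrix of determinant one. -/
theorem Matrix.mul_self_eq_trace_smul_sub_one {M : Matrix (Fin 2) (Fin 2) ℂ} (hM : M.det = 1) :
    M * M = M.trace • M - 1 := by
  rw [det_fin_two] at hM
  ext i j
  fin_cases i <;> fin_cases j <;>
    simp [mul_apply, Fin.sum_univ_two, trace_fin_two] <;>
      first | ring1 | linear_combination hM | linear_combination -hM

theorem Matrix.sin_smul_pow_succ {M : Matrix (Fin 2) (Fin 2) ℂ} (hM : M.det = 1) {θ : ℂ}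
    (ht : M.trace = 2 * Complex.cos θ) (k : ℕ) :
    Complex.sin θ • M ^ (k + 1) = Complex.sin ((k + 1) * θ) • M - Complex.sin (k * θ) • 1 := by
  induction k with
  | zero => simp
  | succ k ih =>
    have hsin : Complex.sin ((k + 1 + 1) * θ) =
        2 * Complex.cos θ * Complex.sin ((k + 1) * θ) - Complex.sin (k * θ) := by
      rw [show ((k : ℂ) + 1 + 1) * θ = (k + 1) * θ + θ by ring,
        show (k : ℂ) * θ = (k + 1) * θ - θ by ring, Complex.sin_add, Complex.sin_sub]
      ring
    rw [pow_succ, ← smul_mul_assoc, ih, sub_mul, smul_mul_assoc,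
      mul_self_eq_trace_smul_sub_one hM, ht]
    push_cast
    rw [hsin, smul_mul_assoc, one_mul]
    module

/-- A matrix in `SL₂(ℂ)` with trace `2 cos (π / n)`, `n ≥ 2`, has `n`-th power `-1`. -/
theorem Matrix.SpecialLinearGroup.pow_eq_neg_one_of_trace {M : SpecialLinearGroup (Fin 2) ℂ}
    {n : ℕ} (hn : 2 ≤ n)
    (ht : (M : Matrix (Fin 2) (Fin 2) ℂ).trace = 2 * (Real.cos (Real.pi / n) : ℂ)) :
    M ^ n = -1 := by
  suffices hpow : (M : Matrix (Fin 2) (Fin 2) ℂ) ^ n = -1 from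
    Matrix.SpecialLinearGroup.ext _ _ fun i j => by
      rw [Matrix.SpecialLinearGroup.coe_pow, hpow, Matrix.SpecialLinearGroup.coe_neg,
        Matrix.SpecialLinearGroup.coe_one]
  obtain ⟨k, rfl⟩ : ∃ k, n = k + 1 := ⟨n - 1, by omega⟩
  set θ : ℝ := Real.pi / (k + 1 : ℕ) with hθ
  have hθn : (k + 1) * θ = Real.pi := by rw [hθ]; push_cast; field_simp
  have hθn' : ((k : ℂ) + 1) * θ = Real.pi := by exact_mod_cast hθn
  have hpos : 0 < Real.sin θ := by
    have hk : (1 : ℝ) ≤ k := by exact_mod_cast (by omega : 1 ≤ k)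
    have := Real.pi_pos
    have h0 : 0 < θ := by positivity
    exact Real.sin_pos_of_pos_of_lt_pi h0 (by nlinarith)
  have hne : Complex.sin (θ : ℂ) ≠ 0 := by exact_mod_cast hpos.ne'
  have key := sin_smul_pow_succ M.2 (θ := θ) (by rw [ht, Complex.ofReal_cos]) k
  rw [hθn', show (k : ℂ) * θ = Real.pi - θ by rw [← hθn']; ring, Complex.sin_pi_sub,
    Complex.sin_pi, zero_smul, zero_sub, ← smul_neg] at key
  exact smul_right_injective _ hne key

/-- Powers of a matrix with determinant one and real trace at least two are nonzero multiples of
the matrix up to scalar matrices. -/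
theorem Matrix.exists_pow_succ_eq_smul_sub {M : Matrix (Fin 2) (Fin 2) ℂ} (hM : M.det = 1)
    {t : ℝ} (ht : M.trace = t) (h2 : 2 ≤ t) (k : ℕ) :
    ∃ u v : ℝ, 0 ≤ v ∧ v < u ∧ M ^ (k + 1) = (u : ℂ) • M - (v : ℂ) • 1 := by
  induction k with
  | zero => exact ⟨1, 0, le_rfl, one_pos, by simp⟩
  | succ k ih =>
    obtain ⟨u, v, hv, huv, h⟩ := ih
    refine ⟨t * u - v, u, by linarith, by nlinarith, ?_⟩
    rw [pow_succ, h, sub_mul, smul_mul_assoc, mul_self_eq_trace_smul_sub_one hM, ht,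
      smul_mul_assoc, one_mul]
    push_cast
    module

/-- Two matrices `X = diag(e^{iπ/a}, e^{-iπ/a})` and `Y` in `SL₂(ℂ)` with traces prescribed by a
triangle with angles `π/a`, `π/b`, `π/c`; no positive power of their commutator is
central. -/
theorem exists_triangle_matrices {a b c : ℕ} (ha : 2 ≤ a) (hb : 2 ≤ b) (hc : 2 ≤ c)
    (h : b * c + a * c + a * b ≤ a * b * c) :
    ∃ X Y : SpecialLinearGroup (Fin 2) ℂ, X ^ a = -1 ∧ Y ^ b = -1 ∧ (-(X * Y)) ^ c = -1 ∧
      ∀ k : ℕ, ⁅X, Y⁆ ^ (k + 1) ∉ Subgroup.center (SpecialLinearGroup (Fin 2) ℂ) := by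
  have hpi := Real.pi_pos
  have ha' : (2 : ℝ) ≤ a := by exact_mod_cast ha
  have hb' : (2 : ℝ) ≤ b := by exact_mod_cast hb
  have hc' : (2 : ℝ) ≤ c := by exact_mod_cast hc
  have hsum : Real.pi / a + Real.pi / b + Real.pi / c ≤ Real.pi := by
    have h' : (b * c + a * c + a * b : ℝ) ≤ a * b * c := by exact_mod_cast h
    rw [show Real.pi / a + Real.pi / b + Real.pi / c =
      Real.pi * (b * c + a * c + a * b) / (a * b * c) by field_simp,
      div_le_iff₀ (by positivity)]
    gcongr
  have hα : 0 < Real.pi / a := by positivity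
  have hβ : 0 < Real.pi / b := by positivity
  have hγ : 0 < Real.pi / c := by positivity
  obtain ⟨α, hαd⟩ : ∃ α, α = Real.pi / (a : ℝ) := ⟨_, rfl⟩
  obtain ⟨β, hβd⟩ : ∃ β, β = Real.pi / (b : ℝ) := ⟨_, rfl⟩
  obtain ⟨γ, hγd⟩ : ∃ γ, γ = Real.pi / (c : ℝ) := ⟨_, rfl⟩
  rw [← hαd, ← hβd, ← hγd] at hsum
  rw [← hαd] at hα
  rw [← hβd] at hβ
  rw [← hγd] at hγ
  have hsα : 0 < Real.sin α := Real.sin_pos_of_pos_of_lt_pi hα (by linarith)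
  have hsβ : 0 < Real.sin β := Real.sin_pos_of_pos_of_lt_pi hβ (by linarith)
  obtain ⟨w, hw⟩ : ∃ w, w * Real.sin α = Real.cos γ + Real.cos α * Real.cos β :=
    ⟨(Real.cos γ + Real.cos α * Real.cos β) / Real.sin α, by field_simp⟩
  have hcos : -Real.cos (α + β) ≤ Real.cos γ := by
    rw [← Real.cos_pi_sub]
    exact Real.cos_le_cos_of_nonneg_of_le_pi hγ.le (by linarith) (by linarith)
  have hwβ : Real.sin β ≤ w := by
    rw [Real.cos_add] at hcos
    refine le_of_mul_le_mul_right ?_ hsα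
    linarith
  have hs : 0 ≤ Real.cos β ^ 2 + w ^ 2 - 1 := by
    nlinarith [Real.sin_sq_add_cos_sq β]
  have hw' : (w : ℂ) * Real.sin α = Real.cos γ + Real.cos α * Real.cos β := by exact_mod_cast hw
  have hw0 : 0 < w := hsβ.trans_le hwβ
  have hI := Complex.I_sq
  have hsc : (Real.sin α : ℂ) ^ 2 + (Real.cos α : ℂ) ^ 2 = 1 := by
    exact_mod_cast Real.sin_sq_add_cos_sq α
  generalize hCα : Real.cos α = ca at *
  generalize hSα : Real.sin α = sa at *
  generalize hCβ : Real.cos β = cb at *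
  generalize hCγ : Real.cos γ = cc at *
  let X : SpecialLinearGroup (Fin 2) ℂ :=
    ⟨!![ca + sa * Complex.I, 0; 0, ca - sa * Complex.I], by
      rw [det_fin_two_of]; linear_combination hsc - sa ^ 2 * hI⟩
  let Y : SpecialLinearGroup (Fin 2) ℂ :=
    ⟨!![cb + w * Complex.I, 1; cb ^ 2 + w ^ 2 - 1, cb - w * Complex.I], by
      rw [det_fin_two_of]; linear_combination - w ^ 2 * hI⟩
  have hX : (X : Matrix (Fin 2) (Fin 2) ℂ) =
    !![ca + sa * Complex.I, 0; 0, ca - sa * Complex.I] := rfl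
  have hY : (Y : Matrix (Fin 2) (Fin 2) ℂ) =
    !![cb + w * Complex.I, 1; cb ^ 2 + w ^ 2 - 1, cb - w * Complex.I] := rfl
  have hcomm : ((⁅X, Y⁆ : SpecialLinearGroup (Fin 2) ℂ) : Matrix (Fin 2) (Fin 2) ℂ) =
      X * Y * (X : Matrix (Fin 2) (Fin 2) ℂ).adjugate * (Y : Matrix (Fin 2) (Fin 2) ℂ).adjugate := by
    simp [commutatorElement_def]
  refine ⟨X, Y, ?_, ?_, ?_, fun k hk => ?_⟩
  · refine Matrix.SpecialLinearGroup.pow_eq_neg_one_of_trace ha ?_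
    rw [← hαd, hCα, hX, trace_fin_two_of]
    ring
  · refine Matrix.SpecialLinearGroup.pow_eq_neg_one_of_trace hb ?_
    rw [← hβd, hCβ, hY, trace_fin_two_of]
    ring
  · refine Matrix.SpecialLinearGroup.pow_eq_neg_one_of_trace hc ?_
    rw [← hγd, hCγ, show ((-(X * Y) : SpecialLinearGroup (Fin 2) ℂ) : Matrix (Fin 2) (Fin 2) ℂ) =
      -(X * Y : Matrix (Fin 2) (Fin 2) ℂ) from rfl, hX, hY, trace_neg, mul_fin_two,
      trace_fin_two_of]
    linear_combination 2 * hw' - 2 * sa * w * hI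
  · have htr : ((⁅X, Y⁆ : SpecialLinearGroup (Fin 2) ℂ) : Matrix (Fin 2) (Fin 2) ℂ).trace =
        ((2 + 4 * (cb ^ 2 + w ^ 2 - 1) * sa ^ 2 : ℝ) : ℂ) := by
      rw [hcomm, hX, hY, adjugate_fin_two_of, adjugate_fin_two_of, mul_fin_two, mul_fin_two,
        mul_fin_two, trace_fin_two_of]
      push_cast
      linear_combination 2 * hsc + (-2 * ca ^ 2 * w ^ 2 - 2 * sa ^ 2 * cb ^ 2
        - 2 * (cb ^ 2 + w ^ 2 - 1) * sa ^ 2 + 2 * sa ^ 2 * w ^ 2 * (Complex.I ^ 2 - 1)) * hI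
    have h01 : ((⁅X, Y⁆ : SpecialLinearGroup (Fin 2) ℂ) : Matrix (Fin 2) (Fin 2) ℂ) 0 1 =
        (cb + w * Complex.I) * (2 * sa * Complex.I) * (ca + sa * Complex.I) := by
      rw [hcomm, hX, hY, adjugate_fin_two_of, adjugate_fin_two_of, mul_fin_two, mul_fin_two,
        mul_fin_two]
      simp only [of_apply, cons_val', cons_val_zero, cons_val_one, cons_val_fin_one]
      ring
    obtain ⟨u, v, hv, huv, hpow⟩ :=
      exists_pow_succ_eq_smul_sub (Matrix.SpecialLinearGroup.det_coe ⁅X, Y⁆) htr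
        (by have := mul_nonneg hs (sq_nonneg sa); linarith) k
    have hu : (u : ℂ) ≠ 0 := by exact_mod_cast (hv.trans_lt huv).ne'
    have hsa : (sa : ℂ) ≠ 0 := by exact_mod_cast hsα.ne'
    have hp : (cb + w * Complex.I : ℂ) ≠ 0 := fun h0 => by
      simpa [hw0.ne'] using congrArg Complex.im h0
    have hq : (ca + sa * Complex.I : ℂ) ≠ 0 := fun h0 => by
      simpa [hsα.ne'] using congrArg Complex.im h0
    have hentry : ((⁅X, Y⁆ ^ (k + 1) : SpecialLinearGroup (Fin 2) ℂ) :
        Matrix (Fin 2) (Fin 2) ℂ) 0 1 ≠ 0 := by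
      have hcoe := (Matrix.SpecialLinearGroup.coe_pow ⁅X, Y⁆ (k + 1)).trans hpow
      rw [hcoe, Matrix.sub_apply, Matrix.smul_apply, h01]
      simp [hu, hsa, hp, hq]
    have hXK := congrArg (fun A : SpecialLinearGroup (Fin 2) ℂ =>
      (A : Matrix (Fin 2) (Fin 2) ℂ) 0 1) (Subgroup.mem_center_iff.1 hk X)
    rw [Matrix.SpecialLinearGroup.coe_mul, Matrix.SpecialLinearGroup.coe_mul, mul_apply, mul_apply,
      Fin.sum_univ_two, Fin.sum_univ_two, hX] at hXK
    simp only [of_apply, cons_val', cons_val_zero, cons_val_one, cons_val_fin_one] at hXK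
    refine hentry ((mul_eq_zero.1 (?_ : (2 * sa * Complex.I) * _ = 0)).resolve_left
      (by simp [hsa]))
    linear_combination hXK

/-- **Parabolic and hyperbolic cases**: if `a, b, c ≥ 2` and
`1/a + 1/b + 1/c ≤ 1`, then the triangle group `T(a,b,c)` is infinite. -/
theorem triangleGroup_infinite (a b c : ℕ)
    (ha : 2 ≤ a) (hb : 2 ≤ b) (hc : 2 ≤ c)
    (h : b * c + a * c + a * b ≤ a * b * c) :
    Infinite (TriangleGroup a b c) := by
  obtain ⟨X, Y, hX, hY, hXY, hcomm⟩ := exists_triangle_matrices ha hb hc h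
  let π := QuotientGroup.mk' (Subgroup.center (SpecialLinearGroup (Fin 2) ℂ))
  have hneg : π (-1) = 1 := (QuotientGroup.eq_one_iff _).2 <| Subgroup.mem_center_iff.2 <| by simp
  have hπneg (g) : π (-g) = π g := by rw [← neg_one_mul, map_mul, hneg, one_mul]
  let f : Fin 3 → SpecialLinearGroup (Fin 2) ℂ ⧸ Subgroup.center _ :=
    ![π X, π Y, (π (X * Y))⁻¹]
  have hf : ∀ r ∈ TriangleRels a b c, FreeGroup.lift f r = 1 := by
    rintro r (rfl | rfl | rfl | rfl)
    · simp only [map_pow, FreeGroup.lift_apply_of]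
      change π X ^ a = 1
      rw [← map_pow, hX, hneg]
    · simp only [map_pow, FreeGroup.lift_apply_of]
      change π Y ^ b = 1
      rw [← map_pow, hY, hneg]
    · simp only [map_pow, FreeGroup.lift_apply_of]
      change (π (X * Y))⁻¹ ^ c = 1
      rw [← hπneg, inv_pow, ← map_pow, hXY, hneg, inv_one]
    · simp only [map_mul, FreeGroup.lift_apply_of]
      change π X * π Y * (π (X * Y))⁻¹ = 1
      rw [map_mul, mul_inv_cancel]
  let φ : TriangleGroup a b c →* _ := PresentedGroup.toGroup hf
  by_contra hfin
  rw [not_infinite_iff_finite] at hfin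
  let x : TriangleGroup a b c := PresentedGroup.of 0
  let y : TriangleGroup a b c := PresentedGroup.of 1
  obtain ⟨n, hn, hpow⟩ := isOfFinOrder_iff_pow_eq_one.1 (isOfFinOrder_of_finite ⁅x, y⁆)
  obtain ⟨k, rfl⟩ : ∃ k, n = k + 1 := ⟨n - 1, by omega⟩
  apply hcomm k
  have hx : φ x = π X := PresentedGroup.toGroup.of hf
  have hy : φ y = π Y := PresentedGroup.toGroup.of hf
  have := congrArg φ hpow
  rw [map_pow, map_commutatorElement, hx, hy, map_one, ← map_commutatorElement, ← map_pow] at this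
  exact (QuotientGroup.eq_one_iff _).1 this
end

section
/- The triangle group T(2,3,4) is isomorphic (as a group) to the symmetric group S_4, the group of all permutations of a four-element set. -/
/-- Representatives of the left cosets of `⟨w⟩` in the group
`⟨x, w | x ^ 2, w ^ 4, (x * w) ^ 3⟩`. -/
def octahedralCosetRep {G : Type*} [Group G] (x w : G) : Fin 6 → G :=
  ![1, x, w * x, w ^ 2 * x, w ^ 3 * x, x * w ^ 2 * x]

section CosetEnumeration

variable {G : Type*} [Group G] {x w : G}

/-- Left multiplication by `w` permutes the cosets of `⟨w⟩` listed by `octahedralCosetRep`. -/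
theorem exists_mul_octahedralCosetRep_right (hw : w ^ 4 = 1)
    (hxw : x * w * x = w ^ 3 * x * w ^ 3) (hwxw : w * x * w = x * w ^ 3 * x) (j : Fin 6) :
    ∃ k n, w * octahedralCosetRep x w j = octahedralCosetRep x w k * w ^ (n : ℕ) := by
  have hw' : w * w ^ 3 = 1 := by rw [← pow_succ', hw]
  fin_cases j
  · exact ⟨0, 1, by simp [octahedralCosetRep]⟩
  · exact ⟨2, 0, by simp [octahedralCosetRep]⟩
  · exact ⟨3, 0, by simp [octahedralCosetRep, sq, mul_assoc]⟩
  · exact ⟨4, 0, by simp [octahedralCosetRep, pow_succ, mul_assoc]⟩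
  · exact ⟨1, 0, by simp [octahedralCosetRep, ← mul_assoc, hw']⟩
  · refine ⟨5, 3, ?_⟩
    change w * (x * w ^ 2 * x) = x * w ^ 2 * x * w ^ 3
    calc w * (x * w ^ 2 * x) = w * x * w * (w * x) := by simp only [sq, mul_assoc]
      _ = x * w ^ 3 * (x * w * x) := by rw [hwxw]; simp only [mul_assoc]
      _ = x * w ^ 2 * (w * w ^ 3) * x * w ^ 3 := by
        rw [hxw]; simp only [pow_succ, pow_zero, one_mul, mul_assoc]
      _ = x * w ^ 2 * x * w ^ 3 := by rw [hw', mul_one]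

/-- Left multiplication by `x` permutes the cosets of `⟨w⟩` listed by `octahedralCosetRep`. -/
theorem exists_mul_octahedralCosetRep_left (hx : x ^ 2 = 1)
    (hxw : x * w * x = w ^ 3 * x * w ^ 3) (hwxw : w * x * w = x * w ^ 3 * x) (j : Fin 6) :
    ∃ k n, x * octahedralCosetRep x w j = octahedralCosetRep x w k * w ^ (n : ℕ) := by
  have hxx : x * x = 1 := by rw [← sq, hx]
  fin_cases j
  · exact ⟨1, 0, by simp [octahedralCosetRep]⟩
  · exact ⟨0, 0, by simp [octahedralCosetRep, hxx]⟩
  · refine ⟨4, 3, ?_⟩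
    change x * (w * x) = w ^ 3 * x * w ^ 3
    rw [← mul_assoc, hxw]
  · exact ⟨5, 0, by simp [octahedralCosetRep, mul_assoc]⟩
  · refine ⟨2, 1, ?_⟩
    change x * (w ^ 3 * x) = w * x * w ^ 1
    rw [pow_one, hwxw, mul_assoc]
  · refine ⟨3, 0, ?_⟩
    change x * (x * w ^ 2 * x) = w ^ 2 * x * w ^ 0
    rw [← mul_assoc, ← mul_assoc, hxx, one_mul, pow_zero, mul_one]

/-- Every element of a group generated by `x` and `w` with `x ^ 2 = w ^ 4 = (x * w) ^ 3 = 1` is one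
of the 24 products `octahedralCosetRep x w j * w ^ i`. -/
theorem surjective_octahedralCosetRep_mul_pow (hx : x ^ 2 = 1) (hw : w ^ 4 = 1)
    (hxw : (x * w) ^ 3 = 1) (hgen : Subgroup.closure {x, w} = ⊤) :
    Function.Surjective
      (fun p : Fin 6 × Fin 4 => octahedralCosetRep x w p.1 * w ^ (p.2 : ℕ)) := by
  have hxx : x * x = 1 := by rw [← sq, hx]
  have hw' : w * w ^ 3 = 1 := by rw [← pow_succ', hw]
  have hxinv : x⁻¹ = x := inv_eq_of_mul_eq_one_right hxx
  have hwinv : w⁻¹ = w ^ 3 := inv_eq_of_mul_eq_one_right hw'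
  have hrel : x * w * x = w ^ 3 * x * w ^ 3 := by
    have h : x * w * x * (w * x * w) = 1 := by simpa [pow_succ, mul_assoc] using hxw
    rw [eq_inv_of_mul_eq_one_left h]
    simp only [mul_inv_rev, hxinv, hwinv, mul_assoc]
  have hrel' : w * x * w = x * w ^ 3 * x := by
    have h : w * x * w * (x * w * x) = 1 := by
      rw [mul_eq_one_iff_eq_inv, eq_comm, inv_eq_iff_mul_eq_one]
      simpa [pow_succ, mul_assoc] using hxw
    rw [eq_inv_of_mul_eq_one_left h]
    simp only [mul_inv_rev, hxinv, hwinv, mul_assoc]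
  have hleft : ∀ g, (∃ k n, g = octahedralCosetRep x w k * w ^ (n : ℕ)) →
      ∃ k n, x * g = octahedralCosetRep x w k * w ^ (n : ℕ) := by
    rintro _ ⟨j, m, rfl⟩
    obtain ⟨k, n, h⟩ := exists_mul_octahedralCosetRep_left hx hrel hrel' j
    exact ⟨k, n + m, by rw [← mul_assoc, h, mul_assoc, pow_add]⟩
  have hright : ∀ g, (∃ k n, g = octahedralCosetRep x w k * w ^ (n : ℕ)) →
      ∃ k n, w * g = octahedralCosetRep x w k * w ^ (n : ℕ) := by
    rintro _ ⟨j, m, rfl⟩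
    obtain ⟨k, n, h⟩ := exists_mul_octahedralCosetRep_right hw hrel hrel' j
    exact ⟨k, n + m, by rw [← mul_assoc, h, mul_assoc, pow_add]⟩
  intro g
  obtain ⟨k, n, rfl⟩ : ∃ k n, g = octahedralCosetRep x w k * w ^ (n : ℕ) := by
    have hg : g ∈ Subgroup.closure {x, w} := hgen ▸ Subgroup.mem_top g
    induction hg using Subgroup.closure_induction_left with
    | one => exact ⟨0, 0, by simp [octahedralCosetRep]⟩
    | mul_left a ha b _ ih =>
      rcases ha with rfl | rfl
      · exact hleft _ ih
      · exact hright _ ih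
    | inv_mul_cancel a ha b _ ih =>
      rcases ha with rfl | rfl
      · rw [hxinv]; exact hleft _ ih
      · rw [hwinv]
        simpa only [pow_succ, pow_zero, one_mul, mul_assoc] using
          hright _ (hright _ (hright _ ih))
  exact ⟨(k, ⟨n % 4, Nat.mod_lt _ (by norm_num)⟩), by simp only [← pow_eq_pow_mod n hw]⟩

end CosetEnumeration

/-- The images of the three generators of `T(2,3,4)` in `S₄`. -/
def triangleGroupPermGen : Fin 3 → Equiv.Perm (Fin 4) :=
  ![Equiv.swap 0 1, Equiv.swap 0 1 * finRotate 4, (finRotate 4)⁻¹]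

/-- The homomorphism `T(2,3,4) → S₄`. -/
def triangleGroupToPerm : TriangleGroup 2 3 4 →* Equiv.Perm (Fin 4) :=
  PresentedGroup.toGroup (f := triangleGroupPermGen) <| by
    rintro r (rfl | rfl | rfl | rfl) <;>
      simp only [map_mul, map_pow, FreeGroup.lift_apply_of] <;> decide

theorem triangleGroupToPerm_surjective : Function.Surjective triangleGroupToPerm := by
  have hswap : Equiv.swap 0 (finRotate 4 0) ∈ triangleGroupToPerm.range :=
    ⟨PresentedGroup.of 0, PresentedGroup.toGroup.of _⟩
  have hrot : finRotate 4 ∈ triangleGroupToPerm.range :=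
    inv_mem_iff.mp ⟨PresentedGroup.of 2, PresentedGroup.toGroup.of _⟩
  rw [← MonoidHom.range_eq_top, eq_top_iff,
    ← Equiv.Perm.closure_cycle_adjacent_swap isCycle_finRotate support_finRotate 0,
    Subgroup.closure_le]
  rintro _ (rfl | rfl)
  · exact hrot
  · exact hswap

/-- The triangle group `T(2,3,4)` has at most 24 elements, all of them products of a coset
representative and a power of `x * y`. -/
theorem exists_surjective_triangleGroup :
    ∃ f : Fin 6 × Fin 4 → TriangleGroup 2 3 4, Function.Surjective f := by
  let x : TriangleGroup 2 3 4 := PresentedGroup.of 0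
  let y : TriangleGroup 2 3 4 := PresentedGroup.of 1
  let z : TriangleGroup 2 3 4 := PresentedGroup.of 2
  have hx : x ^ 2 = 1 := PresentedGroup.one_of_mem (by simp [TriangleRels])
  have hy : y ^ 3 = 1 := PresentedGroup.one_of_mem (by simp [TriangleRels])
  have hz : z ^ 4 = 1 := PresentedGroup.one_of_mem (by simp [TriangleRels])
  have hxyz : x * y * z = 1 := PresentedGroup.one_of_mem (by simp [TriangleRels])
  have hzinv : z⁻¹ = x * y := (eq_inv_of_mul_eq_one_left hxyz).symm
  have hxz : x * z⁻¹ = y := by rw [hzinv, ← mul_assoc, ← sq, hx, one_mul]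
  refine ⟨_, surjective_octahedralCosetRep_mul_pow (x := x) (w := z⁻¹) hx
    (by rw [inv_pow, hz, inv_one]) (by rw [hxz, hy]) ?_⟩
  have hxmem : x ∈ Subgroup.closure {x, z⁻¹} := Subgroup.subset_closure (by simp)
  have hzmem : z⁻¹ ∈ Subgroup.closure {x, z⁻¹} := Subgroup.subset_closure (by simp)
  rw [eq_top_iff, ← PresentedGroup.closure_range_of, Subgroup.closure_le]
  rintro _ ⟨i, rfl⟩
  fin_cases i
  · exact hxmem
  · change y ∈ Subgroup.closure {x, z⁻¹}
    exact hxz ▸ mul_mem hxmem hzmem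
  · exact inv_mem_iff.mp hzmem

/-- The triangle group `T(2,3,4)` is isomorphic to the symmetric group `S₄`. -/
theorem triangleGroup_two_three_four_iso_S4 :
    Nonempty (TriangleGroup 2 3 4 ≃* Equiv.Perm (Fin 4)) := by
  obtain ⟨f, hf⟩ := exists_surjective_triangleGroup
  have : Finite (TriangleGroup 2 3 4) := Finite.of_surjective f hf
  have hcard : Nat.card (TriangleGroup 2 3 4) ≤ Nat.card (Equiv.Perm (Fin 4)) := by
    refine (Nat.card_le_card_of_surjective f hf).trans ?_
    simp [Fintype.card_perm, Nat.factorial]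
  exact ⟨MulEquiv.ofBijective triangleGroupToPerm
    (triangleGroupToPerm_surjective.bijective_of_nat_card_le hcard)⟩
end

section
/- The triangle group T(2,3,5) is isomorphic (as a group) to the alternating group A_5, the alternating group on a five-element set. -/
section IcosahedralNormalForm

variable {G : Type*} [Group G]

/-- The normal forms `zʲ`, `w zʲ`, `zⁱ x zʲ`, `zⁱ (x z² x) zʲ` with `w = x z³ x z² x` for the
elements of the group generated by `x` and `z` subject to `x² = z⁵ = (z x)³ = 1`. -/
def icosahedralWord (x z : G) : (Bool ⊕ Bool × Fin 5) × Fin 5 → G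
  | (.inl false, j) => z ^ (j : ℕ)
  | (.inl true, j) => x * z ^ 3 * x * z ^ 2 * x * z ^ (j : ℕ)
  | (.inr (false, i), j) => z ^ (i : ℕ) * x * z ^ (j : ℕ)
  | (.inr (true, i), j) => z ^ (i : ℕ) * (x * z ^ 2 * x) * z ^ (j : ℕ)

theorem map_icosahedralWord {H : Type*} [Group H] (f : G →* H) (x z : G)
    (c : (Bool ⊕ Bool × Fin 5) × Fin 5) :
    f (icosahedralWord x z c) = icosahedralWord (f x) (f z) c := by
  obtain ⟨(_ | _) | ⟨_ | _, i⟩, j⟩ := c <;> simp [icosahedralWord]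

theorem exists_fin_pow_eq_pow {n : ℕ} [NeZero n] {z : G} (hz : z ^ n = 1) (m : ℕ) :
    ∃ k : Fin n, z ^ (k : ℕ) = z ^ m :=
  ⟨Fin.ofNat n m, (pow_eq_pow_mod m hz).symm⟩

variable {x z : G}

theorem icosahedralWord_eq_mul_pow (c : Bool ⊕ Bool × Fin 5) (j : Fin 5) :
    icosahedralWord x z (c, j) = icosahedralWord x z (c, 0) * z ^ (j : ℕ) := by
  obtain (_ | _) | ⟨_ | _, i⟩ := c <;> simp [icosahedralWord]

theorem mul_pow_mem_range_icosahedralWord (hz : z ^ 5 = 1) {g : G} (m : ℕ)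
    (hg : ∃ c, ∃ k : ℕ, g = icosahedralWord x z (c, 0) * z ^ k) :
    g * z ^ m ∈ Set.range (icosahedralWord x z) := by
  obtain ⟨c, k, rfl⟩ := hg
  obtain ⟨l, hl⟩ := exists_fin_pow_eq_pow hz (k + m)
  exact ⟨(c, l), by rw [icosahedralWord_eq_mul_pow, hl, pow_add, mul_assoc]⟩

theorem mul_mul_self_eq (hx : x ^ 2 = 1) (hz : z ^ 5 = 1) (hzx : (z * x) ^ 3 = 1) :
    x * z * x = z ^ 4 * x * z ^ 4 := by
  simp only [pow_succ, pow_zero, one_mul] at *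
  grind

theorem involution_mul_mem_range_icosahedralWord (hx : x ^ 2 = 1) (hz : z ^ 5 = 1)
    (hzx : (z * x) ^ 3 = 1) {g : G} (hg : g ∈ Set.range (icosahedralWord x z)) :
    x * g ∈ Set.range (icosahedralWord x z) := by
  have hxzx := mul_mul_self_eq hx hz hzx
  obtain ⟨⟨c, j⟩, rfl⟩ := hg
  rw [icosahedralWord_eq_mul_pow, ← mul_assoc]
  apply mul_pow_mem_range_icosahedralWord hz
  obtain (_ | _) | ⟨_ | _, i⟩ := c
  · exact ⟨.inr (false, 0), 0, by simp [icosahedralWord]⟩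
  · refine ⟨.inr (true, 3), 0, ?_⟩
    simp [icosahedralWord, pow_succ] at *
    grind
  · fin_cases i
    on_goal 1 => refine ⟨.inl false, 0, ?_⟩
    on_goal 2 => refine ⟨.inr (false, 4), 4, ?_⟩
    on_goal 3 => refine ⟨.inr (true, 0), 0, ?_⟩
    on_goal 4 => refine ⟨.inr (true, 1), 1, ?_⟩
    on_goal 5 => refine ⟨.inr (false, 1), 1, ?_⟩
    all_goals
      simp [icosahedralWord, pow_succ] at *
      grind
  · fin_cases i
    on_goal 1 => refine ⟨.inr (false, 2), 0, ?_⟩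
    on_goal 2 => refine ⟨.inr (false, 3), 4, ?_⟩
    on_goal 3 => refine ⟨.inr (true, 4), 4, ?_⟩
    on_goal 4 => refine ⟨.inl true, 0, ?_⟩
    on_goal 5 => refine ⟨.inr (true, 2), 1, ?_⟩
    all_goals
      simp [icosahedralWord, pow_succ] at *
      grind

theorem rotation_mul_mem_range_icosahedralWord (hx : x ^ 2 = 1) (hz : z ^ 5 = 1)
    (hzx : (z * x) ^ 3 = 1) {g : G} (hg : g ∈ Set.range (icosahedralWord x z)) :
    z * g ∈ Set.range (icosahedralWord x z) := by
  have hxzx := mul_mul_self_eq hx hz hzx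
  obtain ⟨⟨c, j⟩, rfl⟩ := hg
  rw [icosahedralWord_eq_mul_pow, ← mul_assoc]
  apply mul_pow_mem_range_icosahedralWord hz
  obtain (_ | _) | ⟨b, i⟩ := c
  · exact ⟨.inl false, 1, by simp [icosahedralWord]⟩
  · refine ⟨.inl true, 4, ?_⟩
    simp [icosahedralWord, pow_succ] at *
    grind
  · obtain ⟨k, hk⟩ := exists_fin_pow_eq_pow hz (i + 1)
    refine ⟨.inr (b, k), 0, ?_⟩
    cases b <;> simp [icosahedralWord, hk, pow_succ', mul_assoc]

theorem icosahedralWord_surjective (hx : x ^ 2 = 1) (hz : z ^ 5 = 1) (hzx : (z * x) ^ 3 = 1)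
    (hgen : Subgroup.closure {x, z} = ⊤) : Function.Surjective (icosahedralWord x z) := by
  intro g
  have hg : g ∈ Subgroup.closure {x, z} := hgen ▸ Subgroup.mem_top g
  have hx' : x⁻¹ = x := inv_eq_of_mul_eq_one_left (by rw [← sq, hx])
  have hz' : z⁻¹ = z ^ 4 := inv_eq_of_mul_eq_one_left (by rw [← pow_succ, hz])
  have hX {g : G} := involution_mul_mem_range_icosahedralWord hx hz hzx (g := g)
  have hZ {g : G} := rotation_mul_mem_range_icosahedralWord hx hz hzx (g := g)
  change g ∈ Set.range (icosahedralWord x z)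
  induction hg using Subgroup.closure_induction_left with
  | one => exact ⟨(.inl false, 0), by simp [icosahedralWord]⟩
  | mul_left y hy g _ ih =>
    rcases hy with rfl | rfl
    exacts [hX ih, hZ ih]
  | inv_mul_cancel y hy g _ ih =>
    rcases hy with rfl | rfl
    · rw [hx']
      exact hX ih
    · rw [hz', pow_succ', pow_succ', pow_succ', pow_one]
      simpa only [mul_assoc] using hZ (hZ (hZ (hZ ih)))

end IcosahedralNormalForm

/-- The double transposition `(0 1)(2 3)` in `A₅`. -/
def doubleTransposition : alternatingGroup (Fin 5) :=
  ⟨Equiv.swap 0 1 * Equiv.swap 2 3, by rw [Equiv.Perm.mem_alternatingGroup]; decide⟩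

/-- The `5`-cycle `(0 1 2 3 4)` in `A₅`. -/
def fiveCycle : alternatingGroup (Fin 5) :=
  ⟨finRotate 5, by rw [Equiv.Perm.mem_alternatingGroup]; decide⟩

theorem icosahedralWord_alternatingGroup_bijective :
    Function.Bijective (icosahedralWord doubleTransposition fiveCycle) := by
  rw [Fintype.bijective_iff_injective_and_card]
  exact ⟨by decide +kernel, by decide +kernel⟩

namespace TriangleGroup

theorem of_relations (a b c : ℕ) :
    (PresentedGroup.of 0 : TriangleGroup a b c) ^ a = 1 ∧
    (PresentedGroup.of 1 : TriangleGroup a b c) ^ b = 1 ∧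
    (PresentedGroup.of 2 : TriangleGroup a b c) ^ c = 1 ∧
    (PresentedGroup.of 0 * PresentedGroup.of 1 * PresentedGroup.of 2 :
      TriangleGroup a b c) = 1 := by
  refine ⟨?_, ?_, ?_, ?_⟩ <;>
  exact PresentedGroup.one_of_mem (by simp [TriangleRels])

theorem of_one_eq (a b c : ℕ) : (PresentedGroup.of 1 : TriangleGroup a b c) =
    (PresentedGroup.of 2 * PresentedGroup.of 0)⁻¹ := by
  obtain ⟨-, -, -, h⟩ := of_relations a b c
  rw [mul_inv_rev, eq_mul_inv_iff_mul_eq, eq_inv_iff_mul_eq_one, mul_eq_one_iff_eq_inv]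
  rw [mul_assoc, mul_eq_one_iff_eq_inv'] at h
  exact h

theorem closure_of_eq_top (a b c : ℕ) :
    Subgroup.closure {PresentedGroup.of 0, (PresentedGroup.of 2 : TriangleGroup a b c)} = ⊤ := by
  rw [eq_top_iff, ← PresentedGroup.closure_range_of, Subgroup.closure_le]
  have h0 : PresentedGroup.of 0 ∈ Subgroup.closure
      {PresentedGroup.of 0, (PresentedGroup.of 2 : TriangleGroup a b c)} :=
    Subgroup.subset_closure (by simp)
  have h2 : PresentedGroup.of 2 ∈ Subgroup.closure
      {PresentedGroup.of 0, (PresentedGroup.of 2 : TriangleGroup a b c)} :=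
    Subgroup.subset_closure (by simp)
  rintro _ ⟨i, rfl⟩
  fin_cases i
  · exact h0
  · exact of_one_eq a b c ▸ inv_mem (mul_mem h2 h0)
  · exact h2

/-- The homomorphism from `T(2,3,5)` to `A₅`. -/
def toAlternatingGroup : TriangleGroup 2 3 5 →* alternatingGroup (Fin 5) :=
  PresentedGroup.toGroup
    (f := ![doubleTransposition, (fiveCycle * doubleTransposition)⁻¹, fiveCycle]) <| by
    rintro _ (rfl | rfl | rfl | rfl) <;>
    simp only [map_mul, map_pow, FreeGroup.lift_apply_of] <;> decide +kernel

end TriangleGroup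

/-- The triangle group `T(2,3,5)` is isomorphic to the alternating group `A₅`. -/
theorem triangleGroup_two_three_five_iso_A5 :
    Nonempty (TriangleGroup 2 3 5 ≃* alternatingGroup (Fin 5)) := by
  obtain ⟨hx, hy, hz, -⟩ := TriangleGroup.of_relations 2 3 5
  rw [TriangleGroup.of_one_eq, inv_pow, inv_eq_one] at hy
  have hsurj := icosahedralWord_surjective hx hz hy (TriangleGroup.closure_of_eq_top 2 3 5)
  have hcomp : TriangleGroup.toAlternatingGroup ∘
      icosahedralWord (PresentedGroup.of 0) (PresentedGroup.of 2) =
      icosahedralWord doubleTransposition fiveCycle := by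
    funext c
    simp [map_icosahedralWord, TriangleGroup.toAlternatingGroup]
  have hbij := hcomp ▸ icosahedralWord_alternatingGroup_bijective
  exact ⟨MulEquiv.ofBijective TriangleGroup.toAlternatingGroup
    ⟨hbij.injective.of_comp_right hsurj, hbij.surjective.of_comp⟩⟩
end

section
/- (Classification of polyhedral groups) Every finite subgroup G of PSL(2, ℂ) is isomorphic to one of the following groups: a cyclic group ℤ/nℤ for some n ≥ 1, a dihedral group of order 2n for some n ≥ 2, the alternating group A_4, the symmetric group S_4, or the alternating group A_5. -/
/-- If commuting elements of prime order always have the same order, then the centralizer of an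
element of order `p` is a `p`-group. -/
lemma isPGroup_centralizer_of_commute_orderOf_eq {G : Type*} [Group G] [Finite G]
    (hG : ∀ a b : G, (orderOf a).Prime → (orderOf b).Prime → Commute a b → orderOf a = orderOf b)
    {p : ℕ} (hp : p.Prime) {x : G} (hx : orderOf x = p) :
    IsPGroup p (Subgroup.centralizer {x}) := by
  have := Fact.mk hp
  rw [IsPGroup.iff_card]
  refine ⟨_, Nat.eq_prime_pow_of_unique_prime_dvd Nat.card_pos.ne' fun {q} hq hdvd => ?_⟩
  have := Fact.mk hq
  obtain ⟨y, hy⟩ := exists_prime_orderOf_dvd_card' q hdvd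
  have hy' : orderOf (y : G) = q := by rw [Subgroup.orderOf_coe, hy]
  have hcomm : Commute (y : G) x := Subgroup.mem_centralizer_singleton_iff.1 y.2
  rw [← hy', ← hx]
  exact hG _ _ (hy'.symm ▸ hq) (hx.symm ▸ hp) hcomm

/-- A group with commutative Sylow `p`-subgroups, at least two of them, in which commuting elements
of prime order have the same order, acts faithfully on its Sylow `p`-subgroups. -/
lemma toPermHom_sylow_injective {G : Type*} [Group G] [Finite G]
    (hG : ∀ a b : G, (orderOf a).Prime → (orderOf b).Prime → Commute a b → orderOf a = orderOf b)
    {p : ℕ} [hp : Fact p.Prime]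
    (hcomm : ∀ P : Sylow p G, ∀ x ∈ P, ∀ y ∈ P, Commute x y)
    (hcard : 1 < Nat.card (Sylow p G)) :
    Function.Injective (MulAction.toPermHom G (Sylow p G)) := by
  set K := (MulAction.toPermHom G (Sylow p G)).ker with hK
  have hnorm : ∀ k ∈ K, ∀ P : Sylow p G, k • P = P := fun k hk P => by
    have := DFunLike.congr_fun (MonoidHom.mem_ker.1 hk) P
    simpa using this
  have : Nontrivial (Sylow p G) := Finite.one_lt_card_iff_nontrivial.1 hcard
  -- the kernel has no elements of order `p`
  have hKp : ∀ k ∈ K, orderOf k ≠ p := by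
    intro k hk hkp
    have hpg : IsPGroup p (Subgroup.zpowers k) := by
      rw [IsPGroup.iff_card]; exact ⟨1, by rw [Nat.card_zpowers, hkp, pow_one]⟩
    have hmem : ∀ P : Sylow p G, k ∈ P := fun P => by
      have h1 : k ∈ Subgroup.zpowers k ⊓ Subgroup.normalizer (P : Set G) :=
        ⟨Subgroup.mem_zpowers k, Sylow.smul_eq_iff_mem_normalizer.1 (hnorm k hk P)⟩
      rw [hpg.inf_normalizer_sylow P] at h1
      exact h1.2
    have heq : ∀ P : Sylow p G, Subgroup.centralizer {k} = P := fun P =>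
      P.3 (isPGroup_centralizer_of_commute_orderOf_eq hG hp.out hkp) fun x hx =>
        Subgroup.mem_centralizer_singleton_iff.2 (hcomm P x hx k (hmem P))
    obtain ⟨P, Q, hPQ⟩ := exists_pair_ne (Sylow p G)
    exact hPQ (Sylow.ext ((heq P).symm.trans (heq Q)))
  rw [← MonoidHom.ker_eq_bot_iff, ← hK]
  obtain ⟨P, hP⟩ : ∃ P : Sylow p G, (P : Subgroup G) ≠ ⊥ := by
    by_contra! h
    obtain ⟨P, Q, hPQ⟩ := exists_pair_ne (Sylow p G)
    exact hPQ (Sylow.ext ((h P).trans (h Q).symm))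
  have hPp : p ∣ Nat.card P := by
    refine (P.2.card_eq_or_dvd).resolve_left fun h => hP ?_
    exact Subgroup.card_eq_one.1 h
  obtain ⟨x, hx⟩ := exists_prime_orderOf_dvd_card' p hPp
  have hx' : orderOf (x : G) = p := by rw [Subgroup.orderOf_coe, hx]
  have hdisj : ∀ g ∈ K, g ∈ P → g = 1 := by
    intro g hgK hgP
    by_contra hg
    obtain ⟨n, hn⟩ := P.2 ⟨g, hgP⟩
    have hgp : p ∣ orderOf g := by
      have h1 : orderOf g ∣ p ^ n :=
        orderOf_dvd_of_pow_eq_one (by simpa using congrArg Subtype.val hn)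
      obtain ⟨m, -, hm⟩ := (Nat.dvd_prime_pow hp.out).1 h1
      rw [hm]
      refine dvd_pow_self p ?_
      rintro rfl
      exact hg (orderOf_eq_one_iff.1 (by simpa using hm))
    exact hKp _ (K.pow_mem hgK (orderOf g / p))
      (orderOf_pow_orderOf_div (orderOf_pos g).ne' hgp)
  rw [← Subgroup.card_eq_one]
  by_contra h1
  obtain ⟨q, hq, hqK⟩ := Nat.exists_prime_and_dvd h1
  have := Fact.mk hq
  obtain ⟨k, hk⟩ := exists_prime_orderOf_dvd_card' q hqK
  have hk' : orderOf (k : G) = q := by rw [Subgroup.orderOf_coe, hk]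
  have hkx : (k : G) * x * (k : G)⁻¹ * (x : G)⁻¹ = 1 := by
    refine hdisj _ ?_ ?_
    · have hn : K.Normal := by rw [hK]; infer_instance
      have := K.mul_mem k.2 (hn.conj_mem _ (K.inv_mem k.2) x)
      simpa [mul_assoc] using this
    · refine P.mul_mem ?_ (P.inv_mem x.2)
      exact (Subgroup.mem_normalizer_iff.1
        (Sylow.smul_eq_iff_mem_normalizer.1 (hnorm k k.2 P)) x).1 x.2
  have hc : Commute (k : G) x := by
    have := mul_inv_eq_one.1 hkx
    exact mul_inv_eq_iff_eq_mul.1 this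
  have := hG _ _ (hk'.symm ▸ hq) (hx'.symm ▸ hp.out) hc
  exact hKp k k.2 (this.trans hx')

lemma exists_prime_orderOf_of_dvd_card_subgroup {G : Type*} [Group G] [Finite G] (H : Subgroup G)
    {p : ℕ} (hp : p.Prime) (h : p ∣ Nat.card H) : ∃ x ∈ H, orderOf x = p := by
  have := Fact.mk hp
  obtain ⟨x, hx⟩ := exists_prime_orderOf_dvd_card' p h
  exact ⟨x, x.2, by rw [Subgroup.orderOf_coe, hx]⟩

lemma card_sylow_three_eq_four {G : Type*} [Group G] [Finite G]
    (hG : ∀ a b : G, (orderOf a).Prime → (orderOf b).Prime → Commute a b → orderOf a = orderOf b)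
    (hcard : Nat.card G = 12 ∨ Nat.card G = 24) (P : Sylow 3 G) (hP : Nat.card P = 3) :
    Nat.card (Sylow 3 G) = 4 := by
  have hmod : Nat.card (Sylow 3 G) % 3 = 1 := card_sylow_modEq_one 3 G
  have hindex := (P : Subgroup G).card_mul_index
  rw [hP] at hindex
  have hdvd := P.card_dvd_index
  have h14 : Nat.card (Sylow 3 G) = 1 ∨ Nat.card (Sylow 3 G) = 4 := by
    have hle : Nat.card (Sylow 3 G) ≤ 8 := by
      refine (Nat.le_of_dvd ?_ hdvd).trans ?_ <;> omega
    have h8 : Nat.card (Sylow 3 G) ∣ 8 := hdvd.trans (by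
      rcases hcard with h | h
      · exact ⟨2, by omega⟩
      · exact ⟨1, by omega⟩)
    interval_cases Nat.card (Sylow 3 G) <;> simp_all
  refine h14.resolve_left fun h1 => ?_
  have : Subsingleton (Sylow 3 G) := (Nat.card_eq_one_iff_unique.1 h1).1
  have hn : (P : Subgroup G).Normal := Sylow.normal_of_subsingleton P
  have : IsCyclic P := isCyclic_of_prime_card hP
  let φ : G →* MulAut P := MulAut.conjNormal
  have haut : Nat.card (MulAut P) = 2 := by
    rw [IsCyclic.card_mulAut, hP]; decide
  have hr : Nat.card φ.range ∣ 2 := haut ▸ Subgroup.card_subgroup_dvd_card φ.range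
  have hk : Nat.card φ.ker * Nat.card φ.range = Nat.card G := by
    rw [← Subgroup.index_ker, Subgroup.card_mul_index]
  have heven : 2 ∣ Nat.card φ.ker := by
    rcases (Nat.dvd_prime Nat.prime_two).1 hr with h | h <;> rw [h] at hk <;> omega
  obtain ⟨t, ht, ht2⟩ := exists_prime_orderOf_of_dvd_card_subgroup _ Nat.prime_two heven
  obtain ⟨x, hx, hx3⟩ := exists_prime_orderOf_of_dvd_card_subgroup (P : Subgroup G)
    Nat.prime_three (dvd_of_eq hP.symm)
  have hcomm : Commute t x := by
    have := congrArg (Subtype.val) (DFunLike.congr_fun (MonoidHom.mem_ker.1 ht) ⟨x, hx⟩)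
    rw [MulAut.conjNormal_apply] at this
    exact mul_inv_eq_iff_eq_mul.1 this
  have := hG t x (by rw [ht2]; decide) (by rw [hx3]; decide) hcomm
  omega

lemma card_sylow_of_card_eq {G : Type*} [Group G] [Finite G] {p : ℕ} [hp : Fact p.Prime]
    (P : Sylow p G) {n m : ℕ} (h : Nat.card G = p ^ n * m) (hm : ¬ p ∣ m) :
    Nat.card P = p ^ n := by
  have hm0 : m ≠ 0 := by rintro rfl; simp at hm
  rw [P.card_eq_multiplicity, h, Nat.factorization_mul (pow_ne_zero _ hp.out.ne_zero) hm0]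
  simp [Nat.Prime.factorization_pow hp.out, Nat.factorization_eq_zero_of_not_dvd hm]

/-- An injective homomorphism to the permutations of a set of `n` elements, seen as one into
`Equiv.Perm (Fin n)`. -/
lemma exists_injective_perm_fin {G X : Type*} [Group G] [Finite X] {n : ℕ}
    (f : G →* Equiv.Perm X) (hf : Function.Injective f) (hX : Nat.card X = n) :
    ∃ f : G →* Equiv.Perm (Fin n), Function.Injective f := by
  subst hX
  let e := (Finite.equivFin X).permCongrHom
  exact ⟨e.toMonoidHom.comp f, e.injective.comp hf⟩

lemma nonempty_mulEquiv_alternatingGroup {G : Type*} [Group G] {n : ℕ}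
    (f : G →* Equiv.Perm (Fin n)) (hf : Function.Injective f) (h : 2 * Nat.card G = n.factorial) :
    Nonempty (G ≃* alternatingGroup (Fin n)) := by
  have e := MonoidHom.ofInjective hf
  have hc : Nat.card f.range = Nat.card G := (Nat.card_congr e.toEquiv).symm
  have hi : f.range.index = 2 := by
    have h1 := f.range.card_mul_index
    rw [hc, Nat.card_perm, Nat.card_fin, ← h, mul_comm] at h1
    refine Nat.eq_of_mul_eq_mul_right ?_ h1
    have := n.factorial_pos
    omega
  rw [Equiv.Perm.eq_alternatingGroup_of_index_eq_two hi] at e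
  exact ⟨e⟩

lemma nonempty_mulEquiv_perm {G : Type*} [Group G] {n : ℕ}
    (f : G →* Equiv.Perm (Fin n)) (hf : Function.Injective f) (h : Nat.card G = n.factorial) :
    Nonempty (G ≃* Equiv.Perm (Fin n)) := by
  refine ⟨MulEquiv.ofBijective f ((Nat.bijective_iff_injective_and_card f).2 ⟨hf, ?_⟩)⟩
  rw [h, Nat.card_perm, Nat.card_fin]

/-- A group of order 12 or 24 without elements of order 6 embeds into `S₄`, through its action on
its Sylow 3-subgroups. -/
lemma exists_injective_perm_four {G : Type*} [Group G] [Finite G]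
    (hG : ∀ a b : G, (orderOf a).Prime → (orderOf b).Prime → Commute a b → orderOf a = orderOf b)
    (hcard : Nat.card G = 12 ∨ Nat.card G = 24) :
    ∃ f : G →* Equiv.Perm (Fin 4), Function.Injective f := by
  have hP : ∀ P : Sylow 3 G, Nat.card P = 3 := fun P => by
    rcases hcard with h | h
    · exact card_sylow_of_card_eq P (n := 1) (m := 4) h (by decide)
    · exact card_sylow_of_card_eq P (n := 1) (m := 8) h (by decide)
  have h4 := card_sylow_three_eq_four hG hcard default (hP default)
  refine exists_injective_perm_fin _ (toPermHom_sylow_injective (p := 3) hG ?_ (by omega)) h4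
  intro P x hx y hy
  have : IsCyclic P := isCyclic_of_prime_card (hP P)
  let := IsCyclic.commGroup (α := P)
  exact congrArg Subtype.val (mul_comm (⟨x, hx⟩ : P) ⟨y, hy⟩)

lemma card_sylow_two_eq_five {G : Type*} [Group G] [Finite G]
    (hG : ∀ a b : G, (orderOf a).Prime → (orderOf b).Prime → Commute a b → orderOf a = orderOf b)
    (hcard : Nat.card G = 60) (P : Sylow 2 G) (hP : Nat.card P = 4)
    (hcomm : ∀ x ∈ P, ∀ y ∈ P, Commute x y) :
    Nat.card (Sylow 2 G) = 5 := by
  obtain ⟨t, htP, ht⟩ := exists_prime_orderOf_of_dvd_card_subgroup (P : Subgroup G)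
    Nat.prime_two (hP ▸ by decide)
  have hmul := (Subgroup.normalizer (P : Set G)).card_mul_index
  rw [← P.card_eq_index_normalizer, hcard] at hmul
  -- an element of order five does not normalize `P`
  have h5 : ¬ 5 ∣ Nat.card (Subgroup.normalizer (P : Set G)) := by
    intro h
    obtain ⟨y, hyN, hy⟩ := exists_prime_orderOf_of_dvd_card_subgroup _ Nat.prime_five h
    let φ := (MulAut.toPerm P).comp (P : Subgroup G).normalizerMonoidHom
    have h1 : orderOf (φ ⟨y, hyN⟩) ∣ 5 := by
      rw [← hy, ← Subgroup.orderOf_mk y hyN]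
      exact orderOf_map_dvd φ _
    have h2 : orderOf (φ ⟨y, hyN⟩) ∣ 24 := by
      refine (orderOf_dvd_natCard _).trans ?_
      rw [Nat.card_perm, hP]
      decide
    have h3 : φ ⟨y, hyN⟩ = 1 := by
      rw [← orderOf_eq_one_iff]
      exact Nat.eq_one_of_dvd_coprimes (by decide) h1 h2
    have hc : Commute y t := by
      have := congrArg Subtype.val (DFunLike.congr_fun h3 (⟨t, htP⟩ : P))
      exact mul_inv_eq_iff_eq_mul.1 this
    have := hG y t (by rw [hy]; decide) (by rw [ht]; decide) hc
    omega
  have h4 : 4 ∣ Nat.card (Subgroup.normalizer (P : Set G)) :=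
    hP ▸ Subgroup.card_dvd_of_le Subgroup.le_normalizer
  have h412 : Nat.card (Subgroup.normalizer (P : Set G)) = 4 ∨
      Nat.card (Subgroup.normalizer (P : Set G)) = 12 := by
    obtain ⟨m, hm⟩ := h4
    rw [hm] at hmul h5 ⊢
    have h15 : m ∣ 15 := ⟨Nat.card (Sylow 2 G), by nlinarith⟩
    have := Nat.le_of_dvd (by decide) h15
    interval_cases m <;> simp_all
  rcases h412 with h | h
  · -- `P` is its own normalizer, so it has a normal complement, of order fifteen
    exfalso
    have hle : (P : Subgroup G) = Subgroup.normalizer (P : Set G) :=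
      Subgroup.eq_of_le_of_card_ge Subgroup.le_normalizer (by rw [h]; exact hP.ge)
    have hNC : Subgroup.normalizer (P : Set G) ≤ Subgroup.centralizer (P : Set G) := by
      rw [← hle]
      intro x hx
      exact Subgroup.mem_centralizer_iff.2 fun y hy => hcomm y hy x hx
    set K := (MonoidHom.transferSylow P hNC).ker
    have hK : Nat.card K = 15 := by
      have hKP : Nat.card K * Nat.card P = Nat.card G :=
        (MonoidHom.ker_transferSylow_isComplement' P hNC).card_mul_card
      rw [hP, hcard] at hKP
      omega
    have hs : ∀ p q : ℕ, p.Prime → 15 = p ^ 1 * q → ¬ p ∣ q →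
        (∀ n ≤ 15, n ∣ q → n % p = 1 % p → n = 1) → ∃ H : Subgroup K, H.Normal ∧ Nat.card H = p := by
      intro p q hp hpq hpq' hn
      have := Fact.mk hp
      let Q : Sylow p K := default
      have hQ : Nat.card Q = p := by simpa using card_sylow_of_card_eq Q (hK.trans hpq) hpq'
      have hQi := (Q : Subgroup K).card_mul_index
      rw [hQ, hK, hpq, pow_one] at hQi
      have hQi := Nat.eq_of_mul_eq_mul_left hp.pos hQi
      have hd := Q.card_dvd_index
      rw [hQi] at hd
      have h1 := hn _ ((Nat.le_of_dvd (by grind) (hd.trans (Dvd.intro_left _ hpq.symm)))) hd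
        (card_sylow_modEq_one p K)
      have : Subsingleton (Sylow p K) := (Nat.card_eq_one_iff_unique.1 h1).1
      exact ⟨Q, Sylow.normal_of_subsingleton Q, hQ⟩
    obtain ⟨A, hAn, hA⟩ := hs 3 5 Nat.prime_three rfl (by decide) (by decide)
    obtain ⟨B, hBn, hB⟩ := hs 5 3 Nat.prime_five rfl (by decide) (by decide)
    obtain ⟨a, haA, ha⟩ := exists_prime_orderOf_of_dvd_card_subgroup A Nat.prime_three hA.symm.dvd
    obtain ⟨b, hbB, hb⟩ := exists_prime_orderOf_of_dvd_card_subgroup B Nat.prime_five hB.symm.dvd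
    have hab : Commute a b := Subgroup.commute_of_normal_of_disjoint A B hAn hBn
      (Subgroup.disjoint_of_coprime_natCard (by rw [hA, hB]; decide)) a b haA hbB
    rw [← Subgroup.orderOf_coe] at ha hb
    have := hG a b (by rw [ha]; decide) (by rw [hb]; decide) (congrArg Subtype.val hab)
    omega
  · rw [h] at hmul
    omega

/-- A group of order 60 without elements of order 6, 10 or 15 embeds into `S₅`, through its action
on its Sylow 2-subgroups. -/
lemma exists_injective_perm_five {G : Type*} [Group G] [Finite G]
    (hG : ∀ a b : G, (orderOf a).Prime → (orderOf b).Prime → Commute a b → orderOf a = orderOf b)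
    (hcard : Nat.card G = 60) :
    ∃ f : G →* Equiv.Perm (Fin 5), Function.Injective f := by
  have hP : ∀ P : Sylow 2 G, Nat.card P = 2 ^ 2 := fun P =>
    card_sylow_of_card_eq P (n := 2) (m := 15) hcard (by decide)
  have hcomm : ∀ P : Sylow 2 G, ∀ x ∈ P, ∀ y ∈ P, Commute x y := fun P x hx y hy =>
    congrArg Subtype.val ((IsPGroup.isMulCommutative_of_card_eq_prime_sq (hP P)).is_comm.comm ⟨x, hx⟩ ⟨y, hy⟩)
  have h5 := card_sylow_two_eq_five hG hcard default (hP default) (hcomm default)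
  exact exists_injective_perm_fin _ (toPermHom_sylow_injective (p := 2) hG hcomm (by omega)) h5

/-- A group with a cyclic subgroup of index two outside of which all elements are involutions is
dihedral. -/
lemma nonempty_mulEquiv_dihedralGroup {G : Type*} [Group G] [Finite G] (C : Subgroup G)
    [IsCyclic C] (hindex : C.index = 2) (hC : ∀ g ∉ C, g * g = 1) :
    Nonempty (G ≃* DihedralGroup (Nat.card C)) := by
  obtain ⟨s, hs, -⟩ := Subgroup.index_eq_two_iff_exists_notMem_and.1 hindex
  let e : Multiplicative (ZMod (Nat.card C)) ≃* C := zmodCyclicMulEquiv inferInstance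
  let c : ZMod (Nat.card C) → G := fun i => e (Multiplicative.ofAdd i)
  have hc : ∀ i, c i ∈ C := fun i => (e (Multiplicative.ofAdd i)).2
  have hadd : ∀ i j, c (i + j) = c i * c j := fun i j => by simp [c, ofAdd_add]
  have hinj : Function.Injective c := fun i j h => by simpa [c] using h
  have hs2 : s * s = 1 := hC s hs
  have hcs : ∀ i, c i * s = s * c (-i) := fun i => by
    have h1 := hC (s * c i) fun h => hs ((C.mul_mem_cancel_right (hc i)).1 h)
    have h2 : c i * c (-i) = 1 := by rw [← hadd, add_neg_cancel]; simp [c]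
    calc c i * s = s * (s * c i * (s * c i)) * c (-i) := by
          rw [← mul_one (c i * s), ← h2]
          simp only [← mul_assoc, hs2, one_mul]
      _ = s * c (-i) := by rw [h1, mul_one]
  let f : DihedralGroup (Nat.card C) →* G :=
    { toFun := fun x => match x with
        | .r i => c i
        | .sr i => s * c i
      map_one' := by
        change c 0 = 1
        simp [c]
      map_mul' := by
        rintro (i | i) (j | j)
        · exact hadd i j
        · change s * c (j - i) = c i * (s * c j)
          rw [← mul_assoc, hcs, mul_assoc, ← hadd, sub_eq_neg_add]
        · change s * c (i + j) = s * c i * c j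
          rw [hadd, mul_assoc]
        · change c (j - i) = s * c i * (s * c j)
          rw [mul_assoc, ← mul_assoc (c i), hcs, mul_assoc, ← hadd, ← mul_assoc, hs2, one_mul,
            sub_eq_neg_add] }
  have hf : Function.Injective f := by
    rintro (i | i) (j | j) h
    · exact congrArg _ (hinj h)
    · change c i = s * c j at h
      exact absurd ((C.mul_mem_cancel_right (hc j)).1 (h ▸ hc i)) hs
    · change s * c i = c j at h
      exact absurd ((C.mul_mem_cancel_right (hc i)).1 (h.symm ▸ hc j)) hs
    · exact congrArg _ (hinj (mul_left_cancel h))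
  have hcard : Nat.card (DihedralGroup (Nat.card C)) = Nat.card G := by
    rw [DihedralGroup.nat_card, ← C.card_mul_index, hindex, mul_comm]
  have : Finite (DihedralGroup (Nat.card C)) :=
    Nat.finite_of_card_ne_zero (hcard ▸ Nat.card_pos.ne')
  exact ⟨(MulEquiv.ofBijective f
    ((Nat.bijective_iff_injective_and_card f).2 ⟨hf, hcard⟩)).symm⟩

/-- The solutions of `1/e + 1/f + 1/g = 1 + 2/N`, in terms of the quotients `N/e ≥ N/f ≥ N/g`. -/
lemma orbit_sizes_of_three_orbits_of_le {N x y z e f g : ℕ} (he : 2 ≤ e) (hf : 2 ≤ f) (hg : 2 ≤ g)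
    (hx : e * x = N) (hy : f * y = N) (hz : g * z = N) (hsum : x + y + z = N + 2)
    (hxy : y ≤ x) (hyz : z ≤ y) :
    z = 2 ∨ (N = 12 ∨ N = 24 ∨ N = 60) ∧ N ≤ 5 * z := by
  have he3 : e < 3 := by
    by_contra! h
    have := Nat.mul_le_mul_right x h
    omega
  obtain rfl : e = 2 := by omega
  have hf4 : f < 4 := by
    by_contra! h
    have := Nat.mul_le_mul_right y h
    omega
  interval_cases f
  · left; omega
  · right
    have hg6 : g < 6 := by
      by_contra! h
      have := Nat.mul_le_mul_right z h
      omega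
    interval_cases g <;> omega

lemma orbit_sizes_of_three_orbits {N x y z e f g : ℕ} (he : 2 ≤ e) (hf : 2 ≤ f) (hg : 2 ≤ g)
    (hx : e * x = N) (hy : f * y = N) (hz : g * z = N) (hsum : x + y + z = N + 2) :
    (x = 2 ∨ y = 2 ∨ z = 2) ∨
      (N = 12 ∨ N = 24 ∨ N = 60) ∧ N ≤ 5 * x ∧ N ≤ 5 * y ∧ N ≤ 5 * z := by
  rcases le_total x y with h1 | h1 <;> rcases le_total y z with h2 | h2 <;>
    rcases le_total x z with h3 | h3
  · have := orbit_sizes_of_three_orbits_of_le hg hf he hz hy hx (by omega) h2 h1; omega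
  · have := orbit_sizes_of_three_orbits_of_le hg hf he hz hy hx (by omega) h2 h1; omega
  · have := orbit_sizes_of_three_orbits_of_le hf hg he hy hz hx (by omega) h2 h3; omega
  · have := orbit_sizes_of_three_orbits_of_le hf he hg hy hx hz (by omega) h1 h3; omega
  · have := orbit_sizes_of_three_orbits_of_le hg he hf hz hx hy (by omega) h3 h1; omega
  · have := orbit_sizes_of_three_orbits_of_le he hg hf hx hz hy (by omega) h3 h2; omega
  · have := orbit_sizes_of_three_orbits_of_le he hf hg hx hy hz (by omega) h1 h2; omega
  · have := orbit_sizes_of_three_orbits_of_le he hf hg hx hy hz (by omega) h1 h2; omega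

/-- The possible orbit sizes `m` of a group of order `N` acting with nontrivial stabilizers such
that every nontrivial element has exactly two fixed points. -/
lemma orbit_sizes_of_burnside {Ω : Type*} [Fintype Ω] {N : ℕ} (hN : 0 < N) (m : Ω → ℕ)
    (hm : ∀ ω, ∃ e, 2 ≤ e ∧ e * m ω = N)
    (hsum : ∑ ω, m ω + 2 * (N - 1) = Fintype.card Ω * N) :
    N = 1 ∨ (∃ ω, m ω = 1) ∨ (∃ ω, m ω = 2) ∨
      (N = 12 ∨ N = 24 ∨ N = 60) ∧ ∀ ω, N ≤ 5 * m ω := by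
  have hpos : ∀ ω, 0 < m ω := fun ω => by
    obtain ⟨e, -, he⟩ := hm ω
    exact Nat.pos_of_mul_pos_left (he.symm ▸ hN)
  have hle : 2 * ∑ ω, m ω ≤ Fintype.card Ω * N := by
    rw [Finset.mul_sum, ← smul_eq_mul (Fintype.card Ω), ← Finset.card_univ]
    refine Finset.sum_le_card_nsmul _ _ _ fun ω _ => ?_
    obtain ⟨e, h2, he⟩ := hm ω
    exact he ▸ Nat.mul_le_mul_right _ h2
  have hr : Fintype.card Ω < 4 := by
    by_contra! h
    have := Nat.mul_le_mul_right N h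
    omega
  obtain ⟨k, hk⟩ : ∃ k, Fintype.card Ω = k := ⟨_, rfl⟩
  let φ := Fintype.equivFinOfCardEq hk
  rw [← φ.symm.sum_comp, hk] at hsum
  rw [hk] at hr
  interval_cases k
  · simp at hsum
    omega
  · simp at hsum
    have := hpos (φ.symm 0)
    omega
  · rw [Fin.sum_univ_two] at hsum
    have h0 := hpos (φ.symm 0)
    have h1 := hpos (φ.symm 1)
    exact .inr (.inl ⟨φ.symm 0, by omega⟩)
  · rw [Fin.sum_univ_three] at hsum
    obtain ⟨e, he, hx⟩ := hm (φ.symm 0)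
    obtain ⟨f, hf, hy⟩ := hm (φ.symm 1)
    obtain ⟨g, hg, hz⟩ := hm (φ.symm 2)
    rcases orbit_sizes_of_three_orbits he hf hg hx hy hz (by omega) with
      (h | h | h) | ⟨h, h0, h1, h2⟩
    · exact .inr (.inr (.inl ⟨_, h⟩))
    · exact .inr (.inr (.inl ⟨_, h⟩))
    · exact .inr (.inr (.inl ⟨_, h⟩))
    · refine .inr (.inr (.inr ⟨h, fun ω => ?_⟩))
      obtain ⟨i, rfl⟩ := φ.symm.surjective ω
      fin_cases i <;> assumption

lemma orbit_card_cases_of_card_fixedBy_eq_two {G X : Type*} [Group G] [Finite G] [MulAction G X]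
    [Finite X] (hfix : ∀ g : G, g ≠ 1 → Nat.card (MulAction.fixedBy X g) = 2)
    (hstab : ∀ x : X, MulAction.stabilizer G x ≠ ⊥) :
    Nat.card G = 1 ∨ (∃ x : X, Nat.card (MulAction.orbit G x) = 1) ∨
      (∃ x : X, Nat.card (MulAction.orbit G x) = 2) ∨
      (Nat.card G = 12 ∨ Nat.card G = 24 ∨ Nat.card G = 60) ∧
        ∀ x : X, Nat.card (MulAction.stabilizer G x) ≤ 5 := by
  classical
  have := Fintype.ofFinite G
  have := Fintype.ofFinite X
  let Ω := MulAction.orbitRel.Quotient G X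
  have := Fintype.ofFinite Ω
  let m : Ω → ℕ := fun ω => Nat.card ω.orbit
  have hmk : ∀ x : X, m (Quotient.mk'' x) = Nat.card (MulAction.orbit G x) := fun x => by
    simp only [m, MulAction.orbitRel.Quotient.orbit_mk]
  have hos : ∀ x : X, Nat.card (MulAction.stabilizer G x) * Nat.card (MulAction.orbit G x) =
      Nat.card G := fun x => by
    rw [Nat.card_coe_set_eq, ← MulAction.index_stabilizer, Subgroup.card_mul_index]
  have hsumX : ∑ ω, m ω = Nat.card X := by
    rw [Nat.card_congr (MulAction.selfEquivSigmaOrbits' G X), Nat.card_sigma]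
  have hburn : Nat.card X + 2 * (Nat.card G - 1) = Fintype.card Ω * Nat.card G := by
    have h := MulAction.sum_card_fixedBy_eq_card_orbits_mul_card_group G X
    rw [← Finset.add_sum_erase _ _ (Finset.mem_univ (1 : G)), Finset.sum_congr rfl
      (g := fun _ => 2) fun g hg => by
        rw [← Nat.card_eq_fintype_card, hfix g (Finset.ne_of_mem_erase hg)]] at h
    simp only [Finset.sum_const, Finset.card_erase_of_mem (Finset.mem_univ _), Finset.card_univ,
      smul_eq_mul, ← Nat.card_eq_fintype_card] at h
    rw [← Nat.card_eq_fintype_card, ← h, mul_comm 2]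
    simp
  have key := orbit_sizes_of_burnside (N := Nat.card G) Nat.card_pos m (fun ω => by
    obtain ⟨x, rfl⟩ := Quotient.exists_rep ω
    refine ⟨Nat.card (MulAction.stabilizer G x), ?_, ?_⟩
    · exact (Subgroup.one_lt_card_iff_ne_bot _).2 (hstab x)
    · exact (hmk x).symm ▸ hos x) (hsumX.symm ▸ hburn)
  rcases key with h | ⟨ω, h⟩ | ⟨ω, h⟩ | ⟨h, h5⟩
  · exact .inl h
  · obtain ⟨x, rfl⟩ := Quotient.exists_rep ω
    exact .inr (.inl ⟨x, (hmk x).symm.trans h⟩)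
  · obtain ⟨x, rfl⟩ := Quotient.exists_rep ω
    exact .inr (.inr (.inl ⟨x, (hmk x).symm.trans h⟩))
  · refine .inr (.inr (.inr ⟨h, fun x => ?_⟩))
    have h1 := h5 (Quotient.mk'' x)
    rw [hmk, ← hos x] at h1
    exact Nat.le_of_mul_le_mul_right h1 (Nat.pos_of_mul_pos_left ((hos x).symm ▸ Nat.card_pos))

/-- The points with nontrivial stabilizer. -/
def MulAction.poles (G X : Type*) [Group G] [MulAction G X] : SubMulAction G X where
  carrier := {x | MulAction.stabilizer G x ≠ ⊥}
  smul_mem' g x hx h := by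
    rw [MulAction.stabilizer_smul_eq_stabilizer_map_conj] at h
    exact hx ((Subgroup.map_eq_bot_iff_of_injective _ (MulAut.conj g).injective).1 h)

lemma MulAction.mem_poles_iff {G X : Type*} [Group G] [MulAction G X] {x : X} :
    x ∈ MulAction.poles G X ↔ ∃ g : G, g ≠ 1 ∧ g • x = x := by
  change MulAction.stabilizer G x ≠ ⊥ ↔ _
  rw [Subgroup.ne_bot_iff_exists_ne_one]
  constructor
  · rintro ⟨g, hg⟩
    exact ⟨g, by simpa using hg, g.2⟩
  · rintro ⟨g, hg, hgx⟩
    exact ⟨⟨g, hgx⟩, fun h => hg (congrArg Subtype.val h)⟩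

lemma mul_self_eq_one_of_orbit_card_eq_two {G X : Type*} [Group G] [Finite G] [MulAction G X]
    (hfix : ∀ g : G, g ≠ 1 → (MulAction.fixedBy X g).ncard = 2) {p : X}
    (hp : (MulAction.stabilizer G p).index = 2) {g : G} (hg : g ∉ MulAction.stabilizer G p) :
    g * g = 1 := by
  by_contra hgg
  have hmem : g * g ∈ MulAction.stabilizer G p := Subgroup.mul_self_mem_of_index_two hp g
  have hggp : g • g • p = p := by rw [← mul_smul]; exact hmem
  have hgp : g • p ≠ p := hg
  have hg1 : g ≠ 1 := by rintro rfl; simp at hg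
  obtain ⟨r, hr⟩ : (MulAction.fixedBy X g).Nonempty :=
    Set.nonempty_of_ncard_ne_zero (by rw [hfix g hg1]; decide)
  have hr : g • r = r := hr
  have hrp : r ≠ p := by rintro rfl; exact hgp hr
  have hrq : r ≠ g • p := by rintro rfl; exact hgp (hr.symm.trans hggp)
  have hsub : {p, g • p, r} ⊆ MulAction.fixedBy X (g * g) := by
    rintro x (rfl | rfl | rfl)
    · exact hmem
    · change (g * g) • g • p = g • p
      rw [mul_smul, hggp]
    · change (g * g) • x = x
      rw [mul_smul, hr, hr]
  have h2 := hfix _ hgg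
  have h3 : ({p, g • p, r} : Set X).ncard = 3 := Set.ncard_eq_three.2
    ⟨p, g • p, r, hgp.symm, hrp.symm, hrq.symm, rfl⟩
  have := Set.ncard_le_ncard hsub (Set.finite_of_ncard_ne_zero (by rw [h2]; decide))
  omega

/-- A finite group acting with cyclic stabilizers such that every nontrivial element has exactly
two fixed points is cyclic, dihedral, or isomorphic to `A₄`, `S₄` or `A₅`. -/
theorem polyhedral_of_ncard_fixedBy_eq_two {G X : Type*} [Group G] [Finite G] [MulAction G X]
    (hfix : ∀ g : G, g ≠ 1 → (MulAction.fixedBy X g).ncard = 2)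
    (hcyc : ∀ x : X, IsCyclic (MulAction.stabilizer G x)) :
    (∃ n : ℕ, 1 ≤ n ∧ Nonempty (G ≃* Multiplicative (ZMod n))) ∨
    (∃ n : ℕ, 2 ≤ n ∧ Nonempty (G ≃* DihedralGroup n)) ∨
    Nonempty (G ≃* alternatingGroup (Fin 4)) ∨
    Nonempty (G ≃* Equiv.Perm (Fin 4)) ∨
    Nonempty (G ≃* alternatingGroup (Fin 5)) := by
  have hcyclic : IsCyclic G → ∃ n : ℕ, 1 ≤ n ∧ Nonempty (G ≃* Multiplicative (ZMod n)) :=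
    fun h => ⟨Nat.card G, Nat.card_pos, ⟨(zmodCyclicMulEquiv h).symm⟩⟩
  let Y := MulAction.poles G X
  have hYfin : Finite Y := by
    have hsub : (Y : Set X) ⊆ ⋃ g ∈ {g : G | g ≠ 1}, MulAction.fixedBy X g := fun x hx => by
      obtain ⟨g, hg, hgx⟩ := MulAction.mem_poles_iff.1 hx
      exact Set.mem_biUnion (x := g) hg hgx
    refine Set.Finite.subset (Set.Finite.biUnion (Set.toFinite _) fun g hg => ?_) hsub
    exact Set.finite_of_ncard_ne_zero (by rw [hfix g hg]; decide)
  have hYfix : ∀ g : G, g ≠ 1 → Nat.card (MulAction.fixedBy Y g) = 2 := fun g hg => by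
    rw [← hfix g hg, ← Nat.card_coe_set_eq]
    refine Nat.card_congr ⟨fun y => ⟨y, congrArg Subtype.val y.2⟩,
      fun x => ⟨⟨x, MulAction.mem_poles_iff.2 ⟨g, hg, x.2⟩⟩, Subtype.ext x.2⟩,
      fun _ => rfl, fun _ => rfl⟩
  have hYstab : ∀ y : Y, MulAction.stabilizer G y = MulAction.stabilizer G (y : X) :=
    fun y => SubMulAction.stabilizer_of_subMul y
  rcases orbit_card_cases_of_card_fixedBy_eq_two hYfix (fun y => (hYstab y).symm ▸ y.2) with
    h | ⟨y, hy⟩ | ⟨y, hy⟩ | ⟨hcard, h5⟩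
  · have : Subsingleton G := (Nat.card_eq_one_iff_unique.1 h).1
    exact .inl (hcyclic inferInstance)
  · rw [Nat.card_coe_set_eq, ← MulAction.index_stabilizer, hYstab, Subgroup.index_eq_one] at hy
    have := hcyc y
    rw [hy] at this
    exact .inl (hcyclic (isCyclic_of_surjective _ Subgroup.topEquiv.surjective))
  · rw [Nat.card_coe_set_eq, ← MulAction.index_stabilizer, hYstab] at hy
    have := hcyc y
    exact .inr (.inl ⟨_, (Subgroup.one_lt_card_iff_ne_bot _).2 y.2,
      nonempty_mulEquiv_dihedralGroup _ hy fun g hg =>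
        mul_self_eq_one_of_orbit_card_eq_two hfix hy hg⟩)
  · have horder : ∀ g : G, orderOf g ≤ 5 := fun g => by
      by_cases hg : g = 1
      · simp [hg]
      obtain ⟨y, hy⟩ : (MulAction.fixedBy Y g).Nonempty :=
        Set.nonempty_of_ncard_ne_zero (by rw [← Nat.card_coe_set_eq, hYfix g hg]; decide)
      exact (Nat.le_of_dvd Nat.card_pos
        (Subgroup.orderOf_dvd_natCard (MulAction.stabilizer G y) hy)).trans (h5 y)
    have hG : ∀ a b : G, (orderOf a).Prime → (orderOf b).Prime → Commute a b →
        orderOf a = orderOf b := fun a b ha hb hab => by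
      by_contra hne
      have h := horder (a * b)
      rw [hab.orderOf_mul_eq_mul_orderOf_of_coprime ((Nat.coprime_primes ha hb).2 hne)] at h
      have ha2 := ha.two_le
      have hb2 := hb.two_le
      rcases Nat.lt_or_gt_of_ne hne with hlt | hlt <;> nlinarith
    rcases hcard with h | h | h
    · obtain ⟨f, hf⟩ := exists_injective_perm_four hG (.inl h)
      exact .inr (.inr (.inl (nonempty_mulEquiv_alternatingGroup f hf (by rw [h]; decide))))
    · obtain ⟨f, hf⟩ := exists_injective_perm_four hG (.inr h)
      exact .inr (.inr (.inr (.inl (nonempty_mulEquiv_perm f hf (by rw [h]; decide)))))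
    · obtain ⟨f, hf⟩ := exists_injective_perm_five hG h
      exact .inr (.inr (.inr (.inr (nonempty_mulEquiv_alternatingGroup f hf (by rw [h]; decide)))))

open scoped LinearAlgebra.Projectivization MatrixGroups

namespace Matrix

/-- A matrix of finite order with a single eigenvalue is scalar. -/
lemma eq_smul_one_of_pow_eq_one {n K : Type*} [Fintype n] [DecidableEq n] [Field K] [CharZero K]
    {A : Matrix n n K} {c : K} (hc : c ≠ 0) (hA : (A - c • 1) * (A - c • 1) = 0)
    {m : ℕ} (hm : 0 < m) (hAm : A ^ m = 1) : A = c • 1 := by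
  obtain ⟨N, rfl⟩ : ∃ N, A = c • 1 + N := ⟨A - c • 1, by simp⟩
  rw [add_sub_cancel_left] at hA
  have hpow : ∀ k : ℕ, (c • 1 + N) ^ (k + 1) = c ^ (k + 1) • 1 + ((k + 1) * c ^ k) • N := by
    intro k
    induction k with
    | zero => simp
    | succ k ih =>
      rw [pow_succ, ih]
      simp only [add_mul, mul_add, smul_mul_assoc, mul_smul_comm, hA, mul_one, one_mul,
        smul_zero, add_zero]
      push_cast
      module
  obtain ⟨k, rfl⟩ : ∃ k, m = k + 1 := ⟨m - 1, by omega⟩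
  rw [hpow k] at hAm
  have hk : ((k : K) + 1) * c ^ k ≠ 0 := mul_ne_zero (Nat.cast_add_one_ne_zero k) (pow_ne_zero _ hc)
  obtain ⟨s, hs⟩ : ∃ s : K, N = s • 1 := by
    refine ⟨((k + 1) * c ^ k)⁻¹ * (1 - c ^ (k + 1)), ?_⟩
    rw [mul_smul, sub_smul, one_smul, eq_inv_smul_iff₀ hk]
    exact eq_sub_of_add_eq' hAm
  suffices N = 0 by simp [this]
  rcases isEmpty_or_nonempty n with _ | ⟨⟨i⟩⟩
  · exact Subsingleton.elim _ _
  · rw [hs, smul_mul_smul_comm, mul_one] at hA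
    have : s * s = 0 := by simpa using congrFun₂ hA i i
    rw [hs, mul_self_eq_zero.1 this, zero_smul]

lemma SpecialLinearGroup.sub_smul_mul_sub_smul {K : Type*} [Field K] (A : SL(2, K)) (r s : K)
    (hsum : r + s = (A : Matrix (Fin 2) (Fin 2) K).trace) (hmul : r * s = 1) :
    ((A : Matrix (Fin 2) (Fin 2) K) - r • 1) * (A - s • 1) = 0 := by
  have hdet := A.det_coe
  rw [det_fin_two] at hdet
  rw [trace_fin_two] at hsum
  ext i j
  fin_cases i <;> fin_cases j <;> simp [mul_apply] <;> grind

lemma SpecialLinearGroup.eigenvalue_mul_self {K : Type*} [Field K] (A : SL(2, K))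
    {u : Fin 2 → K} (hu : u ≠ 0) {r : K} (h : (A : Matrix (Fin 2) (Fin 2) K) *ᵥ u = r • u) :
    r * r + 1 = r * (A : Matrix (Fin 2) (Fin 2) K).trace := by
  have hd : ((A : Matrix (Fin 2) (Fin 2) K) - r • 1).det = 0 :=
    exists_mulVec_eq_zero_iff.1 ⟨u, hu, by simp [sub_mulVec, smul_mulVec, h]⟩
  have hdet := A.det_coe
  rw [det_fin_two] at hdet hd
  rw [trace_fin_two]
  simp at hd
  grind

lemma SpecialLinearGroup.exists_eigenvector {K : Type*} [Field K] (A : SL(2, K)) {r : K}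
    (hr : r * r + 1 = r * (A : Matrix (Fin 2) (Fin 2) K).trace) :
    ∃ u : Fin 2 → K, u ≠ 0 ∧ (A : Matrix (Fin 2) (Fin 2) K) *ᵥ u = r • u := by
  have hd : ((A : Matrix (Fin 2) (Fin 2) K) - r • 1).det = 0 := by
    have hdet := A.det_coe
    rw [det_fin_two] at hdet ⊢
    rw [trace_fin_two] at hr
    simp
    grind
  obtain ⟨u, hu, h⟩ := exists_mulVec_eq_zero_iff.2 hd
  refine ⟨u, hu, ?_⟩
  rwa [sub_mulVec, smul_mulVec, one_mulVec, sub_eq_zero] at h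

lemma SpecialLinearGroup.eq_one_of_mulVec_eq_self {K : Type*} [Field K] [CharZero K] {A : SL(2, K)}
    (hA : IsOfFinOrder A) {u : Fin 2 → K} (hu : u ≠ 0)
    (h : (A : Matrix (Fin 2) (Fin 2) K) *ᵥ u = u) : A = 1 := by
  have htr := A.eigenvalue_mul_self hu (r := 1) (by rw [h, one_smul])
  obtain ⟨m, hm, hAm⟩ := isOfFinOrder_iff_pow_eq_one.1 hA
  have := eq_smul_one_of_pow_eq_one one_ne_zero
    (A.sub_smul_mul_sub_smul 1 1 (by simpa using htr) (mul_one 1)) hm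
    (by rw [← SpecialLinearGroup.coe_pow, hAm, SpecialLinearGroup.coe_one])
  exact Subtype.ext (by simpa using this)

lemma SpecialLinearGroup.smul_mk_eq_iff {n K : Type*} [Fintype n] [DecidableEq n] [Field K]
    (A : SpecialLinearGroup n K) {u : n → K} (hu : u ≠ 0) :
    A • Projectivization.mk K u hu = Projectivization.mk K u hu ↔
      ∃ r : K, (A : Matrix n n K) *ᵥ u = r • u := by
  rw [Projectivization.smul_mk, Projectivization.mk_eq_mk_iff']
  exact exists_congr fun r => eq_comm

/-- Eigenvectors for the same eigenvalue, not `±1`, of a matrix in `SL(2, K)` are proportional. -/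
lemma SpecialLinearGroup.mk_eq_mk_of_mulVec_eq_smul {K : Type*} [Field K] (A : SL(2, K))
    {u v : Fin 2 → K} (hu : u ≠ 0) (hv : v ≠ 0) {r : K} (hr : r * r ≠ 1)
    (hAu : (A : Matrix (Fin 2) (Fin 2) K) *ᵥ u = r • u)
    (hAv : (A : Matrix (Fin 2) (Fin 2) K) *ᵥ v = r • v) :
    Projectivization.mk K u hu = Projectivization.mk K v hv := by
  have hdet := A.det_coe
  rw [det_fin_two] at hdet
  have hu0 := congrFun hAu 0
  have hu1 := congrFun hAu 1
  have hv0 := congrFun hAv 0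
  have hv1 := congrFun hAv 1
  simp [mulVec, dotProduct, Fin.sum_univ_two] at hu0 hu1 hv0 hv1
  have hcross : u 0 * v 1 - u 1 * v 0 = 0 := by
    have : (r * r - 1) * (u 0 * v 1 - u 1 * v 0) = 0 := by grind
    exact (mul_eq_zero.1 this).resolve_left (sub_ne_zero.2 hr)
  rw [Projectivization.mk_eq_mk_iff']
  by_cases h0 : v 0 = 0
  · have h1 : v 1 ≠ 0 := fun h1 => hv (funext fun i => by fin_cases i <;> assumption)
    refine ⟨u 1 / v 1, funext fun i => ?_⟩
    fin_cases i <;> simp <;> grind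
  · refine ⟨u 0 / v 0, funext fun i => ?_⟩
    fin_cases i <;> simp <;> grind

lemma SpecialLinearGroup.ncard_fixedBy_eq_two {K : Type*} [Field K] [CharZero K] [IsAlgClosed K]
    {A : SL(2, K)} (hA : IsOfFinOrder A) (hAc : A ∉ Subgroup.center SL(2, K)) :
    (MulAction.fixedBy (ℙ K (Fin 2 → K)) A).ncard = 2 := by
  obtain ⟨r, hr⟩ : ∃ r : K, r * r + 1 = r * (A : Matrix (Fin 2) (Fin 2) K).trace := by
    obtain ⟨r, hr⟩ := exists_quadratic_eq_zero (a := (1 : K))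
      (b := -(A : Matrix (Fin 2) (Fin 2) K).trace) (c := 1) one_ne_zero
      (IsAlgClosed.exists_eq_mul_self _)
    exact ⟨r, by linear_combination hr⟩
  obtain ⟨s, hs⟩ : ∃ s, r + s = (A : Matrix (Fin 2) (Fin 2) K).trace := ⟨_, add_sub_cancel _ _⟩
  have hmul : r * s = 1 := by grind
  have hs' : s * s + 1 = s * (A : Matrix (Fin 2) (Fin 2) K).trace := by grind
  have hne : r ≠ s := by
    rintro rfl
    obtain ⟨m, hm, hAm⟩ := isOfFinOrder_iff_pow_eq_one.1 hA
    have := eq_smul_one_of_pow_eq_one (left_ne_zero_of_mul_eq_one hmul)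
      (A.sub_smul_mul_sub_smul r r hs hmul) hm
      (by rw [← SpecialLinearGroup.coe_pow, hAm, SpecialLinearGroup.coe_one])
    refine hAc (SpecialLinearGroup.mem_center_iff.2 ⟨r, ?_, ?_⟩)
    · rw [Fintype.card_fin, sq, hmul]
    · rw [this, scalar_apply, smul_one_eq_diagonal]
  have hr1 : r * r ≠ 1 := by grind
  have hs1 : s * s ≠ 1 := by grind
  obtain ⟨u, hu, hAu⟩ := A.exists_eigenvector hr
  obtain ⟨v, hv, hAv⟩ := A.exists_eigenvector hs'
  refine Set.ncard_eq_two.2 ⟨.mk K u hu, .mk K v hv, ?_, ?_⟩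
  · rw [Ne, Projectivization.mk_eq_mk_iff']
    rintro ⟨a, rfl⟩
    rw [mulVec_smul, hAv, smul_comm] at hAu
    exact hne (smul_left_injective K hu hAu).symm
  · ext x
    induction x using Projectivization.ind with | _ w hw =>
    simp only [MulAction.mem_fixedBy, Set.mem_insert_iff, Set.mem_singleton_iff]
    constructor
    · intro h
      obtain ⟨t, ht⟩ := (A.smul_mk_eq_iff hw).1 h
      have htt := A.eigenvalue_mul_self hw ht
      have : (t - r) * (t - s) = 0 := by grind
      rcases mul_eq_zero.1 this with h | h <;> obtain rfl := sub_eq_zero.1 h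
      · exact .inl (A.mk_eq_mk_of_mulVec_eq_smul hw hu hr1 ht hAu)
      · exact .inr (A.mk_eq_mk_of_mulVec_eq_smul hw hv hs1 ht hAv)
    · rintro (h | h) <;> rw [h]
      · exact (A.smul_mk_eq_iff hu).2 ⟨r, hAu⟩
      · exact (A.smul_mk_eq_iff hv).2 ⟨s, hAv⟩

lemma SpecialLinearGroup.isCyclic_of_forall_smul_eq {K : Type*} [Field K] [CharZero K]
    (H : Subgroup SL(2, K)) [Finite H] (x : ℙ K (Fin 2 → K)) (hx : ∀ A ∈ H, A • x = x) :
    IsCyclic H := by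
  induction x using Projectivization.ind with | _ u hu =>
  have hev : ∀ A : H, ∃ r : K, (A : Matrix (Fin 2) (Fin 2) K) *ᵥ u = r • u := fun A =>
    (SpecialLinearGroup.smul_mk_eq_iff _ hu).1 (hx A A.2)
  choose χ hχ using hev
  have hinj := smul_left_injective K hu
  let f : H →* K :=
    { toFun := χ
      map_one' := hinj (by simp [← hχ])
      map_mul' := fun A B => hinj (by
        simp only [← hχ, Subgroup.coe_mul, SpecialLinearGroup.coe_mul]
        rw [← mulVec_mulVec, hχ, mulVec_smul, hχ, smul_smul, mul_comm]) }
  refine isCyclic_of_injective_ringHom f ((injective_iff_map_eq_one f).2 fun A hA => ?_)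
  have hA : χ A = 1 := hA
  refine Subtype.ext (SpecialLinearGroup.eq_one_of_mulVec_eq_self ?_ hu ?_)
  · exact Submonoid.isOfFinOrder_coe.2 (isOfFinOrder_of_finite A)
  · rw [hχ, hA, one_smul]

lemma ProjectiveSpecialLinearGroup.finite_comap_mk {n K : Type*} [Fintype n] [DecidableEq n]
    [Field K] (G : Subgroup (ProjectiveSpecialLinearGroup n K)) [Finite G] :
    Finite (G.comap (QuotientGroup.mk' (Subgroup.center (SpecialLinearGroup n K)))) := by
  have : NeZero (max (Fintype.card n) 1) := ⟨by omega⟩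
  have hZ : Finite (Subgroup.center (SpecialLinearGroup n K)) :=
    Finite.of_equiv _ SpecialLinearGroup.center_equiv_rootsOfUnity.symm.toEquiv
  refine Set.Finite.preimage' (f := QuotientGroup.mk' (Subgroup.center (SpecialLinearGroup n K)))
    (Set.toFinite (G : Set (ProjectiveSpecialLinearGroup n K))) fun b _ => ?_
  obtain ⟨B, rfl⟩ := QuotientGroup.mk_surjective b
  refine ((Set.toFinite (Subgroup.center (SpecialLinearGroup n K) : Set _)).image (B * ·)).subset ?_
  intro A hA
  exact ⟨B⁻¹ * A, QuotientGroup.eq.1 (Eq.symm hA), mul_inv_cancel_left B A⟩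

end Matrix

/-- **Classification of polyhedral groups**: every finite subgroup of
`PSL(2, ℂ)` is cyclic, dihedral, or isomorphic to `A₄`, `S₄` or `A₅`. -/
theorem polyhedral_group_classification
    (G : Subgroup (Matrix.ProjectiveSpecialLinearGroup (Fin 2) ℂ))
    (hG : Finite G) :
    (∃ n : ℕ, 1 ≤ n ∧ Nonempty (G ≃* Multiplicative (ZMod n))) ∨
    (∃ n : ℕ, 2 ≤ n ∧ Nonempty (G ≃* DihedralGroup n)) ∨
    Nonempty (G ≃* alternatingGroup (Fin 4)) ∨
    Nonempty (G ≃* Equiv.Perm (Fin 4)) ∨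
    Nonempty (G ≃* alternatingGroup (Fin 5)) := by
  let π := QuotientGroup.mk' (Subgroup.center SL(2, ℂ))
  have hfin : Finite (G.comap π) := Matrix.ProjectiveSpecialLinearGroup.finite_comap_mk G
  refine polyhedral_of_ncard_fixedBy_eq_two (X := ℙ ℂ (Fin 2 → ℂ)) ?_ fun x => ?_
  · rintro ⟨g, hg⟩ hg1
    obtain ⟨A, rfl⟩ := QuotientGroup.mk_surjective g
    refine Matrix.SpecialLinearGroup.ncard_fixedBy_eq_two (A := A) ?_ fun hA => hg1 ?_
    · exact Submonoid.isOfFinOrder_coe.2 (isOfFinOrder_of_finite (⟨A, hg⟩ : G.comap π))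
    · exact Subtype.ext ((QuotientGroup.eq_one_iff A).2 hA)
  · let H := G.comap π ⊓ MulAction.stabilizer SL(2, ℂ) x
    have : Finite H := Set.Finite.subset (s := (G.comap π : Set SL(2, ℂ))) hfin fun _ h => h.1
    have := Matrix.SpecialLinearGroup.isCyclic_of_forall_smul_eq H x fun A hA => hA.2
    let f : H →* MulAction.stabilizer G x :=
      { toFun := fun A => ⟨⟨π A, A.2.1⟩, A.2.2⟩
        map_one' := rfl
        map_mul' := fun _ _ => rfl }
    refine isCyclic_of_surjective f ?_
    rintro ⟨⟨g, hg⟩, hgx⟩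
    obtain ⟨A, rfl⟩ := QuotientGroup.mk_surjective g
    exact ⟨⟨A, hg, hgx⟩, rfl⟩
end

section
/- Let a = (1 2)(3 6) and b = (1 2 3 4 5 6 7) be permutations of a seven-element set (a is the product of the transpositions swapping 1 with 2 and 3 with 6; b is the 7-cycle). Then a has order 2, b has order 7, the product a·b has order 3, and the subgroup of the symmetric group generated by {a, b} is a simple group of cardinality 168. -/
open MulAction

/-- If `p ^ 2` does not divide the order of a group, then a normal subgroup of order divisible by
`p` contains all elements of order `p`. -/
theorem Subgroup.Normal.mem_of_orderOf_eq_prime {G : Type*} [Group G] {p : ℕ}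
    (hp : p.Prime) (hG : ¬ p ^ 2 ∣ Nat.card G) {N : Subgroup G} [N.Normal]
    (hN : p ∣ Nat.card N) {g : G} (hg : orderOf g = p) : g ∈ N := by
  by_contra hgN
  have hdvd : orderOf (g : G ⧸ N) ∣ p := hg ▸ orderOf_map_dvd (QuotientGroup.mk' N) g
  have hne : orderOf (g : G ⧸ N) ≠ 1 := by
    rwa [Ne, orderOf_eq_one_iff, QuotientGroup.eq_one_iff]
  have hquot : p ∣ Nat.card (G ⧸ N) := by
    rw [← (hp.eq_one_or_self_of_dvd _ hdvd).resolve_left hne]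
    exact _root_.orderOf_dvd_natCard _
  apply hG
  rw [Subgroup.card_eq_card_quotient_mul_card_subgroup N, sq]
  exact mul_dvd_mul hquot hN

/-- A nontrivial normal subgroup of a group acting faithfully and transitively on a set of
prime cardinality `p` has order divisible by `p`. -/
theorem Subgroup.Normal.prime_dvd_card_of_isPretransitive {G X : Type*} [Group G]
    [MulAction G X] [FaithfulSMul G X] [IsPretransitive G X] (hX : (Nat.card X).Prime)
    {N : Subgroup G} [N.Normal] (hN : N ≠ ⊥) : Nat.card X ∣ Nat.card N := by
  have : IsPreprimitive G X := IsPreprimitive.of_prime_card hX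
  have : Nonempty X := (Nat.card_pos_iff.mp hX.pos).1
  have hfix : fixedPoints N X ≠ Set.univ := by
    refine fun h => hN ((Subgroup.eq_bot_iff_forall N).mpr fun n hn => ?_)
    refine FaithfulSMul.eq_of_smul_eq_smul (α := X) fun x => ?_
    have hx : x ∈ fixedPoints N X := h ▸ Set.mem_univ x
    simpa using hx ⟨n, hn⟩
  have : IsPretransitive N X := IsQuasiPreprimitive.isPretransitive_of_normal hfix
  rw [← index_stabilizer_of_transitive N (Classical.arbitrary X)]
  exact Subgroup.index_dvd_card _

/-- The third point of the line through `x` and `y` in the Fano plane whose lines are the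
translates of `{0, 1, 3}` modulo `7` (and `x` itself when `x = y`). -/
def fanoThird (x y : Fin 7) : Fin 7 :=
  x + ![0, 3, 6, 1, 5, 4, 2] (y - x)

/-- The collineations of the Fano plane. -/
def fanoCollineations : Subgroup (Equiv.Perm (Fin 7)) where
  carrier := {g | ∀ x y, g (fanoThird x y) = fanoThird (g x) (g y)}
  one_mem' _ _ := rfl
  mul_mem' hg hh x y := by rw [Equiv.Perm.mul_apply, hh x y, hg]; rfl
  inv_mem' {g} hg x y := by
    rw [Equiv.Perm.inv_eq_iff_eq, hg]
    simp

/-- Ordered triangles of the Fano plane. -/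
def IsFanoTriangle (t : Fin 7 × Fin 7 × Fin 7) : Prop :=
  t.1 ≠ t.2.1 ∧ t.2.2 ≠ t.1 ∧ t.2.2 ≠ t.2.1 ∧ t.2.2 ≠ fanoThird t.1 t.2.1

instance : DecidablePred IsFanoTriangle := fun t => by
  unfold IsFanoTriangle
  infer_instance

theorem card_isFanoTriangle : Nat.card {t // IsFanoTriangle t} = 168 := by
  rw [Nat.card_eq_fintype_card]
  decide +kernel

theorem isFanoTriangle_apply {g : Equiv.Perm (Fin 7)} (hg : g ∈ fanoCollineations) :
    IsFanoTriangle (g 0, g 1, g 2) := by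
  refine ⟨?_, ?_, ?_, ?_⟩
  · exact g.injective.ne (by decide)
  · exact g.injective.ne (by decide)
  · exact g.injective.ne (by decide)
  · rw [← hg 0 1]
    exact g.injective.ne (by decide)

/-- A collineation is determined by its values on a triangle. -/
theorem eq_of_apply_eq_of_mem_fanoCollineations {g h : Equiv.Perm (Fin 7)}
    (hg : g ∈ fanoCollineations) (hh : h ∈ fanoCollineations)
    (h0 : g 0 = h 0) (h1 : g 1 = h 1) (h2 : g 2 = h 2) : g = h := by
  have third {x y : Fin 7} (hx : g x = h x) (hy : g y = h y) :
      g (fanoThird x y) = h (fanoThird x y) := by rw [hg, hh, hx, hy]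
  have h3 : g 3 = h 3 := third h0 h1
  have h6 : g 6 = h 6 := third h0 h2
  have h4 : g 4 = h 4 := third h1 h2
  have h5 : g 5 = h 5 := third h0 h4
  ext i
  fin_cases i <;> simp [*]

/-- The double transposition `(1 2)(3 6)`, with labels shifted by one. -/
abbrev foxInvolution : Equiv.Perm (Fin 7) := Equiv.swap 0 1 * Equiv.swap 2 5

/-- The group generated by `(1 2)(3 6)` and `(1 2 3 4 5 6 7)`. -/
abbrev foxGroup : Subgroup (Equiv.Perm (Fin 7)) :=
  Subgroup.closure {foxInvolution, finRotate 7}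

theorem foxInvolution_mem : foxInvolution ∈ foxGroup :=
  Subgroup.subset_closure (Set.mem_insert _ _)

theorem finRotate_mem_foxGroup : finRotate 7 ∈ foxGroup :=
  Subgroup.subset_closure (Set.mem_insert_of_mem _ rfl)

theorem foxGroup_le_fanoCollineations : foxGroup ≤ fanoCollineations := by
  rw [Subgroup.closure_le]
  rintro g (rfl | rfl)
  · change ∀ x y, _
    decide +kernel
  · change ∀ x y, _
    decide +kernel

/-- Representatives of the `168` elements of `foxGroup`, as products of powers of elements of
orders `7`, `4`, `3` and `2`. -/
def foxWord (i j k l : ℕ) : Equiv.Perm (Fin 7) :=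
  let a := foxInvolution
  let b := finRotate 7
  b ^ i * (a * b * a * b ^ 6) ^ j * (b ^ 4 * (a * b) * b ^ 3) ^ k * a ^ l

theorem foxWord_mem (i j k l : ℕ) : foxWord i j k l ∈ foxGroup := by
  have ha := foxInvolution_mem
  have hb := finRotate_mem_foxGroup
  have hb' (n : ℕ) : finRotate 7 ^ n ∈ foxGroup := pow_mem hb n
  exact mul_mem (mul_mem (mul_mem (hb' i)
    (pow_mem (mul_mem (mul_mem (mul_mem ha hb) ha) (hb' 6)) j))
    (pow_mem (mul_mem (mul_mem (hb' 4) (mul_mem ha hb)) (hb' 3)) k)) (pow_mem ha l)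

theorem exists_foxWord_apply_eq : ∀ t, IsFanoTriangle t →
    ∃ (i : Fin 7) (j : Fin 4) (k : Fin 3) (l : Fin 2),
      (foxWord i j k l 0, foxWord i j k l 1, foxWord i j k l 2) = t := by
  decide +kernel

theorem card_foxGroup : Nat.card foxGroup = 168 := by
  rw [← card_isFanoTriangle]
  refine Nat.card_eq_of_bijective
    (fun g : foxGroup => (⟨(g.1 0, g.1 1, g.1 2),
      isFanoTriangle_apply (foxGroup_le_fanoCollineations g.2)⟩ : {t // IsFanoTriangle t}))
    ⟨fun g h hgh => ?_, fun ⟨t, ht⟩ => ?_⟩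
  · simp only [Subtype.mk.injEq, Prod.mk.injEq] at hgh
    exact Subtype.ext (eq_of_apply_eq_of_mem_fanoCollineations
      (foxGroup_le_fanoCollineations g.2) (foxGroup_le_fanoCollineations h.2)
      hgh.1 hgh.2.1 hgh.2.2)
  · obtain ⟨i, j, k, l, h⟩ := exists_foxWord_apply_eq t ht
    exact ⟨⟨foxWord i j k l, foxWord_mem i j k l⟩, Subtype.ext h⟩

theorem orderOf_finRotate_seven : orderOf (finRotate 7) = 7 :=
  have : Fact (Nat.Prime 7) := ⟨by norm_num⟩
  orderOf_eq_prime (by decide +kernel) (by decide +kernel)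

instance isPretransitive_foxGroup : IsPretransitive foxGroup (Fin 7) := by
  have h : ∀ x y : Fin 7, ∃ i : Fin 7, (finRotate 7 ^ (i : ℕ)) x = y := by decide +kernel
  refine ⟨fun x y => ?_⟩
  obtain ⟨i, hi⟩ := h x y
  exact ⟨⟨_, pow_mem finRotate_mem_foxGroup i⟩, hi⟩

theorem foxInvolution_sq : foxInvolution ^ 2 = 1 := by decide +kernel

theorem foxInvolution_mul_finRotate_pow_three : (foxInvolution * finRotate 7) ^ 3 = 1 := by
  decide +kernel

/-- In a group with `a ^ 2 = (a * b) ^ 3 = 1`, a normal subgroup containing `b` contains `a`. -/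
theorem Subgroup.Normal.mem_of_sq_eq_one_of_mul_pow_three_eq_one {G : Type*} [Group G]
    {N : Subgroup G} [N.Normal] {a b : G} (ha : a ^ 2 = 1) (hab : (a * b) ^ 3 = 1)
    (hb : b ∈ N) : a ∈ N := by
  rw [← QuotientGroup.eq_one_iff] at hb ⊢
  have h3 := congrArg (QuotientGroup.mk' N) hab
  have h2 := congrArg (QuotientGroup.mk' N) ha
  simp only [map_pow, map_mul, map_one, QuotientGroup.mk'_apply, hb, mul_one] at h2 h3
  rwa [pow_succ, h2, one_mul] at h3

/-- A transitive group of permutations of a set of prime cardinality `p`, generated by an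
element `b` of order `p` and an involution `a` with `(a * b) ^ 3 = 1`, is simple as soon as its
order is not divisible by `p ^ 2`. -/
theorem isSimpleGroup_closure_pair {X : Type*} {a b : Equiv.Perm X} (hX : (Nat.card X).Prime)
    [IsPretransitive (Subgroup.closure {a, b}) X]
    (hcard : ¬ Nat.card X ^ 2 ∣ Nat.card (Subgroup.closure {a, b}))
    (ha : a ^ 2 = 1) (hb : orderOf b = Nat.card X) (hab : (a * b) ^ 3 = 1) :
    IsSimpleGroup (Subgroup.closure {a, b}) := by
  let a' : Subgroup.closure {a, b} := ⟨a, Subgroup.subset_closure (Set.mem_insert _ _)⟩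
  let b' : Subgroup.closure {a, b} := ⟨b, Subgroup.subset_closure (Set.mem_insert_of_mem _ rfl)⟩
  have hb' : orderOf b' = Nat.card X := (Subgroup.orderOf_mk _ _).trans hb
  have : Nontrivial (Subgroup.closure {a, b}) := by
    refine ⟨b', 1, fun h => hX.ne_one ?_⟩
    rw [← hb', h, orderOf_one]
  refine ⟨fun N hN => or_iff_not_imp_left.mpr fun hbot => ?_⟩
  have hbN : b' ∈ N := hN.mem_of_orderOf_eq_prime hX hcard
    (hN.prime_dvd_card_of_isPretransitive hX hbot) hb'
  have haN : a' ∈ N := hN.mem_of_sq_eq_one_of_mul_pow_three_eq_one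
    (Subtype.ext ha) (Subtype.ext hab) hbN
  have hle : Subgroup.closure {a, b} ≤ N.map (Subgroup.closure {a, b}).subtype := by
    rw [Subgroup.closure_le]
    rintro g (rfl | rfl)
    · exact ⟨a', haN, rfl⟩
    · exact ⟨b', hbN, rfl⟩
  rw [eq_top_iff]
  intro g _
  obtain ⟨n, hn, hng⟩ := hle g.2
  rwa [← Subtype.ext hng]

theorem isSimpleGroup_foxGroup : IsSimpleGroup foxGroup := by
  apply isSimpleGroup_closure_pair
  · rw [Nat.card_fin]
    norm_num
  · rw [card_foxGroup, Nat.card_fin]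
    norm_num
  · exact foxInvolution_sq
  · rw [orderOf_finRotate_seven, Nat.card_fin]
  · exact foxInvolution_mul_finRotate_pow_three

/-- The permutations `a = (1 2)(3 6)` and `b = (1 2 3 4 5 6 7)` of a
seven-element set (here realized on `Fin 7`, with labels shifted by one)
have orders 2 and 7, their product has order 3, and they generate a simple
group of cardinality 168. -/
theorem fox_example_237 :
    let a : Equiv.Perm (Fin 7) := Equiv.swap 0 1 * Equiv.swap 2 5
    let b : Equiv.Perm (Fin 7) := finRotate 7
    orderOf a = 2 ∧ orderOf b = 7 ∧ orderOf (a * b) = 3 ∧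
      IsSimpleGroup (Subgroup.closure {a, b}) ∧
      Nat.card (Subgroup.closure {a, b}) = 168 := by
  have : Fact (Nat.Prime 2) := ⟨Nat.prime_two⟩
  have : Fact (Nat.Prime 3) := ⟨Nat.prime_three⟩
  exact ⟨orderOf_eq_prime foxInvolution_sq (by decide +kernel), orderOf_finRotate_seven,
    orderOf_eq_prime foxInvolution_mul_finRotate_pow_three (by decide +kernel),
    isSimpleGroup_foxGroup, card_foxGroup⟩
end

section
/- Let a = (3 4)(5 7) and b = (1 2 3 4 5 6 7) be permutations of a seven-element set (a is the product of the transpositions swapping 3 with 4 and 5 with 7; b is the 7-cycle). Then a has order 2, b has order 7, the product a·b has order 4, and the subgroup of the symmetric group generated by {a, b} is a simple group of cardinality 168. -/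
open Equiv MulAction

namespace FanoPlane

/-- The involution `(2 3)(4 6)` of the points of the Fano plane. -/
def involution : Perm (Fin 7) := swap 2 3 * swap 4 6

/-- The cyclic shift of the points of the Fano plane. -/
def rotation : Perm (Fin 7) := finRotate 7

/-- The group generated by the involution and the rotation. -/
abbrev group : Subgroup (Perm (Fin 7)) := Subgroup.closure {involution, rotation}

/-- The third point on the line through `x` and `y` in the Fano plane whose lines are the
translates of `{0, 2, 3}` modulo `7`; on the diagonal, `third x x = x`. -/
def third (x y : Fin 7) : Fin 7 := x + ![0, 5, 3, 2, 6, 1, 4] (y - x)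

/-- The ordered triples of non-collinear points. -/
def triangles : Finset (Fin 7 × Fin 7 × Fin 7) :=
  Finset.univ.filter fun t => t.1 ≠ t.2.1 ∧ t.2.2 ≠ t.1 ∧ t.2.2 ≠ t.2.1 ∧ t.2.2 ≠ third t.1 t.2.1

lemma involution_mem : involution ∈ group := Subgroup.subset_closure (by simp)

lemma rotation_mem : rotation ∈ group := Subgroup.subset_closure (by simp)

lemma map_third {g : Perm (Fin 7)} (hg : g ∈ group) :
    ∀ x y, g (third x y) = third (g x) (g y) := by
  induction hg using Subgroup.closure_induction with
  | mem g hg =>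
    rcases hg with rfl | rfl
    · decide
    · decide
  | one => simp
  | mul g h _ _ hg hh => intro x y; simp [hg, hh]
  | inv g _ hg => intro x y; rw [Perm.inv_eq_iff_eq, hg]; simp

lemma ext_of_triangle {g h : Perm (Fin 7)} (hg : g ∈ group) (hh : h ∈ group)
    (h0 : g 0 = h 0) (h1 : g 1 = h 1) (h2 : g 2 = h 2) : g = h := by
  have step {x y : Fin 7} (hx : g x = h x) (hy : g y = h y) : g (third x y) = h (third x y) := by
    rw [map_third hg, map_third hh, hx, hy]
  have h5 : g 5 = h 5 := step h0 h1
  have h3 : g 3 = h 3 := step h0 h2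
  have h6 : g 6 = h 6 := step h1 h2
  have h4 : g 4 = h 4 := step h0 h6
  ext x
  fin_cases x <;> simp [*]

lemma exists_map_zero (p : Fin 7) : ∃ g ∈ group, g 0 = p := by
  refine ⟨rotation ^ (p : ℕ), pow_mem rotation_mem _, ?_⟩
  revert p
  decide

lemma exists_fix_zero_map_one : ∀ q : Fin 7, q ≠ 0 → ∃ g ∈ group, g 0 = 0 ∧ g 1 = q := by
  have ha := involution_mem
  have hx : rotation⁻¹ * involution * rotation ∈ group :=
    mul_mem (mul_mem (inv_mem rotation_mem) ha) rotation_mem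
  have hy : rotation ^ 2 * involution * (rotation ^ 2)⁻¹ ∈ group :=
    mul_mem (mul_mem (pow_mem rotation_mem 2) ha) (inv_mem (pow_mem rotation_mem 2))
  intro q hq
  fin_cases q
  · exact absurd rfl hq
  · exact ⟨1, one_mem _, by decide⟩
  · exact ⟨_, hx, by decide⟩
  · exact ⟨_, mul_mem ha hx, by decide⟩
  · exact ⟨_, mul_mem ha hy, by decide⟩
  · exact ⟨_, mul_mem hx (mul_mem ha hx), by decide⟩
  · exact ⟨_, hy, by decide⟩

lemma exists_fix_zero_one_map_two :
    ∀ r : Fin 7, r ≠ 0 → r ≠ 1 → r ≠ third 0 1 → ∃ g ∈ group, g 0 = 0 ∧ g 1 = 1 ∧ g 2 = r := by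
  have ha := involution_mem
  have hc : rotation * involution * rotation⁻¹ ∈ group :=
    mul_mem (mul_mem rotation_mem ha) (inv_mem rotation_mem)
  have hz := mul_mem hc (mul_mem ha hc)
  intro r h0 h1 h5
  fin_cases r
  · exact absurd rfl h0
  · exact absurd rfl h1
  · exact ⟨1, one_mem _, by decide⟩
  · exact ⟨_, ha, by decide⟩
  · exact ⟨_, hz, by decide⟩
  · exact absurd rfl h5
  · exact ⟨_, mul_mem ha hz, by decide⟩

lemma exists_map_triangle {p q r : Fin 7} (hpq : p ≠ q) (hrp : r ≠ p) (hrq : r ≠ q)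
    (hr : r ≠ third p q) : ∃ g ∈ group, g 0 = p ∧ g 1 = q ∧ g 2 = r := by
  obtain ⟨g, hg, rfl⟩ := exists_map_zero p
  obtain ⟨q, rfl⟩ := g.surjective q
  obtain ⟨r, rfl⟩ := g.surjective r
  rw [← map_third hg] at hr
  simp only [ne_eq, g.injective.eq_iff] at hpq hrp hrq hr
  obtain ⟨h, hh, h0, rfl⟩ := exists_fix_zero_map_one q (Ne.symm hpq)
  obtain ⟨r, rfl⟩ := h.surjective r
  rw [← h0, ← map_third hh] at hr
  rw [← h0] at hrp
  simp only [h.injective.eq_iff] at hrp hrq hr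
  obtain ⟨k, hk, k0, k1, rfl⟩ := exists_fix_zero_one_map_two r hrp hrq hr
  exact ⟨g * h * k, mul_mem (mul_mem hg hh) hk, by simp [k0, h0], by simp [k1], rfl⟩

lemma card_group : Nat.card group = 168 := by
  let f : group → Fin 7 × Fin 7 × Fin 7 := fun g => (g.1 0, g.1 1, g.1 2)
  have hf : Function.Injective f := by
    intro g h hgh
    simp only [f, Prod.mk.injEq] at hgh
    exact Subtype.ext (ext_of_triangle g.2 h.2 hgh.1 hgh.2.1 hgh.2.2)
  have hrange : Set.range f = triangles := by
    ext ⟨p, q, r⟩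
    simp only [triangles, Set.mem_range, Finset.coe_filter, Finset.mem_univ, true_and,
      Set.mem_ofPred_eq]
    constructor
    · rintro ⟨g, hg⟩
      simp only [f, Prod.mk.injEq] at hg
      obtain ⟨rfl, rfl, rfl⟩ := hg
      rw [← map_third g.2]
      simp only [ne_eq, g.1.injective.eq_iff]
      decide
    · rintro ⟨hpq, hrp, hrq, hr⟩
      obtain ⟨g, hg, rfl, rfl, rfl⟩ := exists_map_triangle hpq hrp hrq hr
      exact ⟨⟨g, hg⟩, rfl⟩
  rw [← Nat.card_range_of_injective hf, hrange, Nat.card_coe_set_eq, Set.ncard_coe_finset]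
  decide +kernel

instance : IsPretransitive group (Fin 7) :=
  (isPretransitive_iff_base (0 : Fin 7)).mpr fun p =>
    let ⟨g, hg, h⟩ := exists_map_zero p
    ⟨⟨g, hg⟩, h⟩

lemma orderOf_rotation : orderOf rotation = 7 :=
  have : Fact (Nat.Prime 7) := ⟨by norm_num⟩
  orderOf_eq_prime (by decide) (by decide)

lemma seven_dvd_card_of_normal {N : Subgroup group} [N.Normal] (hN : N ≠ ⊥) :
    7 ∣ Nat.card N := by
  have : IsPreprimitive group (Fin 7) := IsPreprimitive.of_prime_card (by norm_num)
  have hfix : fixedPoints N (Fin 7) ≠ Set.univ := by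
    intro h
    refine hN ((Subgroup.eq_bot_iff_forall N).mpr fun g hg => Subtype.ext (Perm.ext fun x => ?_))
    have hx : x ∈ fixedPoints N (Fin 7) := h ▸ Set.mem_univ x
    exact hx ⟨g, hg⟩
  have := IsQuasiPreprimitive.isPretransitive_of_normal hfix
  have := (stabilizer N (0 : Fin 7)).index_dvd_card
  rwa [index_stabilizer_of_transitive, Nat.card_eq_fintype_card, Fintype.card_fin] at this

/-- In the quotient by a nontrivial normal subgroup, of order dividing `24`, the rotation becomes
trivial. -/
lemma rotation_mem_of_normal {N : Subgroup group} [N.Normal] (hN : N ≠ ⊥) :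
    (⟨rotation, rotation_mem⟩ : group) ∈ N := by
  rw [← QuotientGroup.eq_one_iff, ← orderOf_eq_one_iff]
  obtain ⟨m, hm⟩ := seven_dvd_card_of_normal hN
  have hcard := N.card_mul_index
  rw [card_group, hm] at hcard
  have hindex : N.index ∣ 24 := ⟨m, by lia⟩
  refine Nat.eq_one_of_dvd_coprimes (show Nat.Coprime 7 24 by norm_num) ?_
    ((orderOf_dvd_natCard _).trans hindex)
  refine orderOf_dvd_of_pow_eq_one ?_
  rw [← QuotientGroup.mk_pow, QuotientGroup.eq_one_iff]
  have : (⟨rotation, rotation_mem⟩ : group) ^ 7 = 1 := Subtype.ext (by decide : rotation ^ 7 = 1)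
  exact this ▸ one_mem N

lemma involution_mem_of_normal {N : Subgroup group} (hnormal : N.Normal)
    (h : (⟨rotation, rotation_mem⟩ : group) ∈ N) : (⟨involution, involution_mem⟩ : group) ∈ N := by
  set a : group := ⟨involution, involution_mem⟩
  set b : group := ⟨rotation, rotation_mem⟩
  have key : a = (b⁻¹ * a * b * a) * b * (b⁻¹ * a * b * a)⁻¹ * b ^ 4 := by
    apply Subtype.ext
    change involution = (rotation⁻¹ * involution * rotation * involution) * rotation *
      (rotation⁻¹ * involution * rotation * involution)⁻¹ * rotation ^ 4
    decide +kernel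
  rw [key]
  exact mul_mem (hnormal.conj_mem _ h _) (pow_mem h 4)

lemma isSimpleGroup_group : IsSimpleGroup group where
  exists_pair_ne := ⟨⟨involution, involution_mem⟩, 1, fun h =>
    absurd (congrArg Subtype.val h) (by decide : involution ≠ 1)⟩
  eq_bot_or_eq_top_of_normal N hnormal := by
    refine or_iff_not_imp_left.mpr fun hN => ?_
    have hb := rotation_mem_of_normal hN
    have ha := involution_mem_of_normal hnormal hb
    have hle : group ≤ N.map group.subtype := by
      rw [Subgroup.closure_le]
      rintro _ (rfl | rfl)
      · exact ⟨_, ha, rfl⟩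
      · exact ⟨_, hb, rfl⟩
    rw [eq_top_iff]
    rintro g -
    obtain ⟨n, hn, hng⟩ := hle g.2
    rwa [← Subtype.ext hng]

end FanoPlane

/-- The permutations `a = (3 4)(5 7)` and `b = (1 2 3 4 5 6 7)` of a
seven-element set (here realized on `Fin 7`, with labels shifted by one)
have orders 2 and 7, their product has order 4, and they generate a simple
group of cardinality 168. -/
theorem fox_example_247 :
    let a : Equiv.Perm (Fin 7) := Equiv.swap 2 3 * Equiv.swap 4 6
    let b : Equiv.Perm (Fin 7) := finRotate 7
    orderOf a = 2 ∧ orderOf b = 7 ∧ orderOf (a * b) = 4 ∧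
      IsSimpleGroup (Subgroup.closure {a, b}) ∧
      Nat.card (Subgroup.closure {a, b}) = 168 := by
  intro a b
  refine ⟨orderOf_eq_prime (by decide) (by decide), FanoPlane.orderOf_rotation, ?_,
    FanoPlane.isSimpleGroup_group, FanoPlane.card_group⟩
  exact orderOf_eq_prime_pow (p := 2) (n := 1) (by decide) (by decide)
end

section
/- Let a = (1 4)(2 6)(3 7)(5 8) and b = (1 2 3 4 5 6 7 8 9) be permutations of a nine-element set (a is the product of the four indicated transpositions; b is the 9-cycle). Then a has order 2, b has order 9, the product a·b has order 3, and the subgroup of the symmetric group generated by {a, b} is a simple group of cardinality 504. -/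
open MulAction

/-- An element of order prime to the index of a normal subgroup lies in that subgroup. -/
theorem Subgroup.Normal.mem_of_pow_eq_one_of_coprime_index {G : Type*} [Group G] {N : Subgroup G}
    (hN : N.Normal) {g : G} {m : ℕ} (hg : g ^ m = 1) (hm : m.Coprime N.index) : g ∈ N := by
  have h₁ : (g : G ⧸ N) ^ m = 1 := by rw [← QuotientGroup.mk_pow, hg, QuotientGroup.mk_one]
  have h₂ : (g : G ⧸ N) ^ N.index = 1 := by
    rw [← QuotientGroup.mk_pow, QuotientGroup.eq_one_iff]
    exact N.pow_index_mem g
  rw [← QuotientGroup.eq_one_iff, ← orderOf_eq_one_iff, ← Nat.dvd_one, ← hm.gcd_eq_one]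
  exact Nat.dvd_gcd (orderOf_dvd_of_pow_eq_one h₁) (orderOf_dvd_of_pow_eq_one h₂)

namespace PSLTwoEight

/-- The involution `(0 3)(1 5)(2 6)(4 7)` of `Fin 9`. -/
def invol : Equiv.Perm (Fin 9) :=
  Equiv.swap 0 3 * Equiv.swap 1 5 * Equiv.swap 2 6 * Equiv.swap 4 7

/-- The group generated by `invol` and the `9`-cycle `finRotate 9`; it is a copy of `PSL(2, 8)`
acting on the projective line over the field with eight elements. -/
def grp : Subgroup (Equiv.Perm (Fin 9)) := Subgroup.closure {invol, finRotate 9}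

theorem invol_mem : invol ∈ grp := Subgroup.subset_closure (by simp)

theorem finRotate_mem : finRotate 9 ∈ grp := Subgroup.subset_closure (by simp)

/-- The point at a fixed cross-ratio with `0`, `y`, `z`, with value `0` when these
three points are not distinct. -/
def fourthPointZero : Fin 9 → Fin 9 → Fin 9 :=
  ![![0, 0, 0, 0, 0, 0, 0, 0, 0],
    ![0, 0, 3, 7, 2, 4, 5, 8, 6],
    ![0, 5, 0, 6, 3, 8, 1, 4, 7],
    ![0, 4, 7, 0, 6, 1, 8, 5, 2],
    ![0, 6, 8, 5, 0, 2, 7, 3, 1],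
    ![0, 8, 6, 2, 7, 0, 4, 1, 3],
    ![0, 7, 4, 1, 8, 3, 0, 2, 5],
    ![0, 2, 5, 8, 1, 6, 3, 0, 4],
    ![0, 3, 1, 4, 5, 7, 2, 6, 0]]

/-- The point at a fixed cross-ratio with `x`, `y`, `z`, with value `x` when these
three points are not distinct. -/
def fourthPoint (x y z : Fin 9) : Fin 9 := x + fourthPointZero (y - x) (z - x)

theorem invol_fourthPoint : ∀ x y z,
    invol (fourthPoint x y z) = fourthPoint (invol x) (invol y) (invol z) := by
  decide +kernel

theorem finRotate_fourthPoint (x y z : Fin 9) :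
    finRotate 9 (fourthPoint x y z) =
      fourthPoint (finRotate 9 x) (finRotate 9 y) (finRotate 9 z) := by
  simp only [finRotate_apply, fourthPoint, add_sub_add_right_eq_sub]
  abel

theorem apply_fourthPoint {g : Equiv.Perm (Fin 9)} (hg : g ∈ grp) :
    ∀ x y z, g (fourthPoint x y z) = fourthPoint (g x) (g y) (g z) := by
  induction hg using Subgroup.closure_induction with
  | mem g hg =>
    rcases hg with rfl | rfl
    exacts [invol_fourthPoint, finRotate_fourthPoint]
  | one => simp
  | mul g h _ _ hg hh => simp [hg, hh]
  | inv g _ hg => intro x y z; rw [Equiv.Perm.inv_eq_iff_eq, hg]; simp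

/-- An element of the group is determined by the images of `0`, `1`, `2`. -/
theorem eq_of_apply_eq {g h : Equiv.Perm (Fin 9)} (hg : g ∈ grp) (hh : h ∈ grp)
    (h₀ : g 0 = h 0) (h₁ : g 1 = h 1) (h₂ : g 2 = h 2) : g = h := by
  have next (x : Fin 9) (hx : g x = h x) (hx₁ : g (x + 1) = h (x + 1))
      (hx₂ : g (x + 2) = h (x + 2)) : g (x + 3) = h (x + 3) := by
    have key : ∀ x : Fin 9, x + 3 = fourthPoint x (x + 1) (x + 2) := by decide
    rw [key, apply_fourthPoint hg, apply_fourthPoint hh, hx, hx₁, hx₂]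
  have h₃ := next 0 h₀ h₁ h₂
  have h₄ := next 1 h₁ h₂ h₃
  have h₅ := next 2 h₂ h₃ h₄
  have h₆ := next 3 h₃ h₄ h₅
  have h₇ := next 4 h₄ h₅ h₆
  have h₈ := next 5 h₅ h₆ h₇
  ext x
  fin_cases x
  all_goals exact congrArg Fin.val (by assumption)

theorem exists_apply_zero (x : Fin 9) : ∃ g ∈ grp, g 0 = x :=
  ⟨finRotate 9 ^ (x : ℕ), pow_mem finRotate_mem _, by revert x; decide +kernel⟩

/-- The stabilizer of `0` is transitive on the other points. -/
theorem exists_apply_one {y : Fin 9} (hy : y ≠ 0) : ∃ g ∈ grp, g 0 = 0 ∧ g 1 = y := by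
  have key : ∀ y : Fin 9, y ≠ 0 → ∃ k : Fin 7, ∃ l : Fin 2,
      ((finRotate 9 ^ 6 * invol) ^ (k : ℕ) * (finRotate 9 * invol * finRotate 9 ^ 8) ^ (l : ℕ)) 0
        = 0 ∧
      ((finRotate 9 ^ 6 * invol) ^ (k : ℕ) * (finRotate 9 * invol * finRotate 9 ^ 8) ^ (l : ℕ)) 1
        = y := by
    decide +kernel
  obtain ⟨k, l, h⟩ := key y hy
  have hb := finRotate_mem
  exact ⟨_, mul_mem (pow_mem (mul_mem (pow_mem hb _) invol_mem) _)
    (pow_mem (mul_mem (mul_mem hb invol_mem) (pow_mem hb _)) _), h⟩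

/-- The pointwise stabilizer of `0` and `1` is transitive on the other points. -/
theorem exists_apply_two {z : Fin 9} (hz₀ : z ≠ 0) (hz₁ : z ≠ 1) :
    ∃ g ∈ grp, g 0 = 0 ∧ g 1 = 1 ∧ g 2 = z := by
  have key : ∀ z : Fin 9, z ≠ 0 → z ≠ 1 → ∃ k : Fin 7,
      ((finRotate 9 ^ 4 * invol * finRotate 9) ^ (k : ℕ)) 0 = 0 ∧
      ((finRotate 9 ^ 4 * invol * finRotate 9) ^ (k : ℕ)) 1 = 1 ∧
      ((finRotate 9 ^ 4 * invol * finRotate 9) ^ (k : ℕ)) 2 = z := by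
    decide +kernel
  obtain ⟨k, h⟩ := key z hz₀ hz₁
  have hb := finRotate_mem
  exact ⟨_, pow_mem (mul_mem (mul_mem (pow_mem hb _) invol_mem) hb) _, h⟩

theorem exists_apply_eq {x y z : Fin 9} (hxy : x ≠ y) (hxz : x ≠ z) (hyz : y ≠ z) :
    ∃ g ∈ grp, g 0 = x ∧ g 1 = y ∧ g 2 = z := by
  obtain ⟨g, hg, rfl⟩ := exists_apply_zero x
  obtain ⟨h, hh, h₀, h₁⟩ := exists_apply_one (y := g⁻¹ y) (by
    rw [Ne, Equiv.Perm.inv_eq_iff_eq]; exact hxy.symm)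
  rw [Equiv.Perm.eq_inv_iff_eq] at h₁
  obtain ⟨k, hk, k₀, k₁, k₂⟩ := exists_apply_two (z := h⁻¹ (g⁻¹ z))
    (by rw [Ne, Equiv.Perm.inv_eq_iff_eq, Equiv.Perm.inv_eq_iff_eq, h₀]; exact hxz.symm)
    (by rw [Ne, Equiv.Perm.inv_eq_iff_eq, Equiv.Perm.inv_eq_iff_eq, h₁]; exact hyz.symm)
  exact ⟨g * h * k, mul_mem (mul_mem hg hh) hk, by simp [h₀, k₀], by simp [h₁, k₁], by simp [k₂]⟩

/-- The group is sharply `3`-transitive. -/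
theorem bijective_smul_castLEEmb :
    Function.Bijective fun g : grp => g • Fin.castLEEmb (show 3 ≤ 9 by decide) := by
  constructor
  · intro g h hgh
    have hgh' (i : Fin 3) := DFunLike.congr_fun hgh i
    exact Subtype.ext (eq_of_apply_eq g.2 h.2 (hgh' 0) (hgh' 1) (hgh' 2))
  · intro f
    obtain ⟨g, hg, h₀, h₁, h₂⟩ := exists_apply_eq (f.injective.ne (show (0 : Fin 3) ≠ 1 by decide))
      (f.injective.ne (show (0 : Fin 3) ≠ 2 by decide))
      (f.injective.ne (show (1 : Fin 3) ≠ 2 by decide))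
    refine ⟨⟨g, hg⟩, DFunLike.ext _ _ fun i => ?_⟩
    fin_cases i
    exacts [h₀, h₁, h₂]

theorem natCard_grp : Nat.card grp = 504 := by
  rw [Nat.card_congr (Equiv.ofBijective _ bijective_smul_castLEEmb), Nat.card_eq_fintype_card,
    Fintype.card_embedding_eq]
  rfl

instance isPreprimitive_grp : IsPreprimitive grp (Fin 9) := by
  have : IsMultiplyPretransitive grp (Fin 9) 3 :=
    (isPretransitive_iff_base _).2 bijective_smul_castLEEmb.surjective
  exact isPreprimitive_of_is_two_pretransitive
    (isMultiplyPretransitive_of_le (n := 3) (by decide) (by simp))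

theorem invol_sq : invol ^ 2 = 1 := by decide +kernel

theorem finRotate_pow_nine : finRotate 9 ^ 9 = 1 := by decide +kernel

theorem invol_mul_finRotate_pow_three : (invol * finRotate 9) ^ 3 = 1 := by decide +kernel

theorem invol_ne_one : invol ≠ 1 := by decide +kernel

theorem eq_top_of_normal {N : Subgroup grp} (hN : N.Normal) (hbot : N ≠ ⊥) : N = ⊤ := by
  have : IsPretransitive N (Fin 9) := by
    refine IsQuasiPreprimitive.isPretransitive_of_normal (G := grp) fun hfix => hbot ?_
    refine N.eq_bot_iff_forall.2 fun g hg => Subtype.ext (Equiv.ext fun x => ?_)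
    exact (hfix ▸ Set.mem_univ x : x ∈ fixedPoints N (Fin 9)) ⟨g, hg⟩
  have hcard : 9 ∣ Nat.card N := by
    have h := (stabilizer N (0 : Fin 9)).index_dvd_card
    rwa [index_stabilizer_of_transitive, Nat.card_fin] at h
  have hindex : N.index ∣ 56 := by
    obtain ⟨k, hk⟩ := hcard
    refine ⟨k, ?_⟩
    have := N.card_mul_index
    rw [natCard_grp, hk] at this
    lia
  have hb : (⟨finRotate 9, finRotate_mem⟩ : grp) ∈ N :=
    hN.mem_of_pow_eq_one_of_coprime_index (Subtype.ext finRotate_pow_nine)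
      (Nat.Coprime.coprime_dvd_right hindex (by norm_num))
  have hab : (⟨invol, invol_mem⟩ * ⟨finRotate 9, finRotate_mem⟩ : grp) ∈ N :=
    hN.mem_of_pow_eq_one_of_coprime_index (Subtype.ext invol_mul_finRotate_pow_three)
      (Nat.Coprime.coprime_dvd_right hindex (by norm_num))
  have ha : (⟨invol, invol_mem⟩ : grp) ∈ N := (N.mul_mem_cancel_right hb).1 hab
  have hgen : Subgroup.closure (((↑) : grp → Equiv.Perm (Fin 9)) ⁻¹' {invol, finRotate 9}) = ⊤ :=
    Subgroup.closure_closure_coe_preimage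
  rw [eq_top_iff, ← hgen, Subgroup.closure_le]
  rintro ⟨g, hg⟩ (rfl | rfl)
  exacts [ha, hb]

theorem isSimpleGroup_grp : IsSimpleGroup grp where
  exists_pair_ne := ⟨⟨invol, invol_mem⟩, 1, fun h => invol_ne_one (congrArg Subtype.val h)⟩
  eq_bot_or_eq_top_of_normal _ hN := or_iff_not_imp_left.2 (eq_top_of_normal hN)

end PSLTwoEight

/-- The permutations `a = (1 4)(2 6)(3 7)(5 8)` and `b = (1 2 3 4 5 6 7 8 9)`
of a nine-element set (here realized on `Fin 9`, with labels shifted by one)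
have orders 2 and 9, their product has order 3, and they generate a simple
group of cardinality 504. -/
theorem fox_example_239 :
    let a : Equiv.Perm (Fin 9) :=
      Equiv.swap 0 3 * Equiv.swap 1 5 * Equiv.swap 2 6 * Equiv.swap 4 7
    let b : Equiv.Perm (Fin 9) := finRotate 9
    orderOf a = 2 ∧ orderOf b = 9 ∧ orderOf (a * b) = 3 ∧
      IsSimpleGroup (Subgroup.closure {a, b}) ∧
      Nat.card (Subgroup.closure {a, b}) = 504 := by
  intro a b
  refine ⟨orderOf_eq_prime PSLTwoEight.invol_sq PSLTwoEight.invol_ne_one,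
    orderOf_eq_prime_pow (p := 3) (n := 1) (by decide +kernel) PSLTwoEight.finRotate_pow_nine,
    orderOf_eq_prime PSLTwoEight.invol_mul_finRotate_pow_three (by decide +kernel),
    PSLTwoEight.isSimpleGroup_grp, PSLTwoEight.natCard_grp⟩
end
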